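/- arXiv:2204.06865 — 7 statements merged into one kernel-verified Lean document; each statement's English description precedes it below -/
import Mathlib

section
/- Let A be a nonzero commutative noetherian ring with Krull dimension d (possibly infinite). Then for every natural number n with n ≤ d there exists an A-module M whose projective dimension over A is exactly n. -/
/-!
STATEMENT 7: Let A be a nonzero commutative noetherian ring with Krull dimension d
(possibly infinite).  Then for every natural number n with n ≤ d there exists an
A-module M whose projective dimension over A is exactly n.
-/

open CategoryTheory

universe u

/-- `Ext_A^i(M, N)` as an `A`-module. -/
noncomputable abbrev extGroup (A : Type u) [CommRing A] (M N : ModuleCat.{u} A) (i : ℕ) :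
    ModuleCat A :=
  ((Ext A (ModuleCat.{u} A) i).obj (Opposite.op M)).obj N

/-- The projective dimension of an `A`-module `M`, defined as the least `n : ℕ∞` such that
`Ext_A^i(M, N) = 0` for every `A`-module `N` and every `i > n` (and `∞` if no such `n` exists). -/
noncomputable def projDim (A : Type u) [CommRing A] (M : ModuleCat.{u} A) : ℕ∞ :=
  sInf {n : ℕ∞ | ∀ (N : ModuleCat.{u} A) (i : ℕ), n < (i : ℕ∞) →
    Subsingleton (extGroup A M N i)}
theorem bridge_ext (A : Type u) [CommRing A] (M N : ModuleCat.{u} A) (j : ℕ) :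
    Subsingleton (extGroup A M N (j+1)) ↔ Subsingleton (Abelian.Ext.{u} M N (j+1)) := by
  let P := projectiveResolution M
  have e : extGroup A M N (j+1) ≅ (P.complex.linearYonedaObj A N).homology (j+1) :=
    P.isoExt (R := A) (j+1) N
  rw [← ModuleCat.isZero_iff_subsingleton, e.isZero_iff,
    ← HomologicalComplex.exactAt_iff_isZero_homology,
    HomologicalComplex.exactAt_iff' _ j (j+1) (j+2) (by simp) (by simp),
    ShortComplex.moduleCat_exact_iff]
  have h1 : (∀ (f : P.complex.X (j+1) ⟶ N), P.complex.d (j+2) (j+1) ≫ f = 0 →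
      ∃ g : P.complex.X j ⟶ N, P.complex.d (j+1) j ≫ g = f) ↔
      Subsingleton (Abelian.Ext.{u} M N (j+1)) := by
    constructor
    · intro h
      refine subsingleton_of_forall_eq 0 fun α => ?_
      obtain ⟨f, hf, rfl⟩ := P.extMk_surjective α (j+2) rfl
      exact (P.extMk_eq_zero_iff f (j+2) rfl hf j rfl).2 (h f hf)
    · intro h f hf
      exact (P.extMk_eq_zero_iff f (j+2) rfl hf j rfl).1 (Subsingleton.elim _ _)
  rw [← h1]
  exact Iff.rfl

theorem projDim_eq_of (A : Type u) [CommRing A] (M B : ModuleCat.{u} A) (n : ℕ)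
    (h1 : HasProjectiveDimensionLT M (n+2))
    (h2 : ¬ Subsingleton (Abelian.Ext.{u} M B (n+1))) : projDim A M = ((n+1 : ℕ) : ℕ∞) := by
  apply le_antisymm
  · apply sInf_le
    intro N i hi
    have hi' : n + 1 < i := by exact_mod_cast hi
    obtain ⟨j, rfl⟩ : ∃ j, i = j + 1 := ⟨i-1, by omega⟩
    rw [bridge_ext]
    exact HasProjectiveDimensionLT.subsingleton M (n+2) (j+1) (by omega) N
  · apply le_sInf
    intro m hm
    by_contra hlt
    exact h2 ((bridge_ext A M B n).1 (hm B (n+1) (not_le.1 hlt)))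

theorem projDim_zero_of (A : Type u) [CommRing A] (M : ModuleCat.{u} A) 
    (h1 : Projective M) : projDim A M = 0 := by
  apply le_antisymm _ bot_le
  refine sInf_le (α := ℕ∞) (a := 0) ?_
  intro N i hi
  have hi' : 0 < i := by exact_mod_cast hi
  obtain ⟨j, rfl⟩ : ∃ j, i = j + 1 := ⟨i-1, by omega⟩
  rw [bridge_ext]
  exact HasProjectiveDimensionLT.subsingleton M 1 (j+1) (by omega) N

/-- Dimension shifting along multiplication by an element killing `B`. -/
theorem ext_shift {A : Type u} [CommRing A] {L L' : ModuleCat.{u} A} (a : A) (g : L ⟶ L')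
    (w : (a • 𝟙 L) ≫ g = 0) (hS : (ShortComplex.mk (a • 𝟙 L) g w).ShortExact)
    (B : ModuleCat.{u} A) (hB : ∀ b : B, a • b = 0) (m : ℕ)
    (h : ¬ Subsingleton (Abelian.Ext.{u} L B m)) :
    ¬ Subsingleton (Abelian.Ext.{u} L' B (m+1)) := by
  intro hs
  apply h
  have hz : (a • 𝟙 B) = 0 := by
    ext b; exact hB b
  refine subsingleton_of_forall_eq 0 fun α => ?_
  obtain ⟨x, rfl⟩ := Abelian.Ext.contravariant_sequence_exact₁ hS B α (n₁ := m+1) (by omega)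
    (Subsingleton.elim (α := Abelian.Ext.{u} L' B (m+1)) _ _)
  change Abelian.Ext.{u} L B m at x
  have : a • x = 0 := by
    rw [Abelian.Ext.smul_eq_comp_mk₀, hz]; simp
  change (Abelian.Ext.mk₀ (a • 𝟙 L)).comp x _ = 0
  rw [Abelian.Ext.mk₀_smul, Abelian.Ext.smul_comp, Abelian.Ext.mk₀_id_comp, this]

/-- The localization of `A ⧸ J` at the powers of `s`. -/
noncomputable abbrev locQuot {A : Type u} [CommRing A] (s : A) (J : Ideal A) : ModuleCat.{u} A :=
  ModuleCat.of A (LocalizedModule (Submonoid.powers s) (A ⧸ J))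

/-- the projection between localized quotients -/
noncomputable def locQuotMap {A : Type u} [CommRing A] (s : A) {J K : Ideal A} (h : J ≤ K) :
    LocalizedModule (Submonoid.powers s) (A ⧸ J) →ₗ[A]
      LocalizedModule (Submonoid.powers s) (A ⧸ K) :=
  IsLocalizedModule.map (Submonoid.powers s) (LocalizedModule.mkLinearMap _ _)
    (LocalizedModule.mkLinearMap _ _) (Submodule.factor h)

theorem locQuotMap_mk {A : Type u} [CommRing A] (s : A) {J K : Ideal A} (h : J ≤ K) (x : A)
    (t : Submonoid.powers s) : locQuotMap s h (LocalizedModule.mk (Ideal.Quotient.mk J x) t) =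
      LocalizedModule.mk (Ideal.Quotient.mk K x) t := by
  rw [locQuotMap, IsLocalizedModule.map_LocalizedModules]
  rfl

theorem locQuot_mk_eq_zero {A : Type u} [CommRing A] (s : A) {K : Ideal A} (x : A)
    (t : Submonoid.powers s) :
    (LocalizedModule.mk (Ideal.Quotient.mk K x) t : locQuot s K) = 0 ↔ ∃ m : ℕ, s ^ m * x ∈ K := by
  rw [← LocalizedModule.zero_mk 1, LocalizedModule.mk_eq]
  constructor
  · rintro ⟨⟨_, m, rfl⟩, hu⟩
    refine ⟨m, ?_⟩
    rw [← Ideal.Quotient.eq_zero_iff_mem]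
    simpa [Submonoid.smul_def, Algebra.smul_def] using hu
  · rintro ⟨m, hm⟩
    refine ⟨⟨s ^ m, m, rfl⟩, ?_⟩
    rw [← Ideal.Quotient.eq_zero_iff_mem] at hm
    simpa [Submonoid.smul_def, Algebra.smul_def] using hm

theorem locQuot_induction {A : Type u} [CommRing A] (s : A) {J : Ideal A} (y : locQuot s J) :
    ∃ (x : A) (t : Submonoid.powers s), y = LocalizedModule.mk (Ideal.Quotient.mk J x) t := by
  induction y using LocalizedModule.induction_on with
  | h m t =>
    obtain ⟨x, rfl⟩ := Ideal.Quotient.mk_surjective m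
    exact ⟨x, t, rfl⟩

theorem locQuot_smul_mk {A : Type u} [CommRing A] (s : A) {J : Ideal A} (a x : A)
    (t : Submonoid.powers s) :
    a • (LocalizedModule.mk (Ideal.Quotient.mk J x) t : locQuot s J) =
      LocalizedModule.mk (Ideal.Quotient.mk J (a * x)) t := by
  rw [LocalizedModule.smul'_mk]
  rfl

theorem locQuot_shortExact {A : Type u} [CommRing A] (s : A) (J : Ideal A) (a : A)
    (ha : ∀ x, a * x ∈ J → ∃ m : ℕ, s ^ m * x ∈ J) :
    ∃ w, (ShortComplex.mk (a • 𝟙 (locQuot s J))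
      (ModuleCat.ofHom (locQuotMap s (le_sup_left : J ≤ J ⊔ Ideal.span {a}))) w).ShortExact := by
  have hid : ∀ y : locQuot s J, (a • 𝟙 (locQuot s J)).hom y = a • y := fun _ => rfl
  have w : (a • 𝟙 (locQuot s J)) ≫
      (ModuleCat.ofHom (locQuotMap s (le_sup_left : J ≤ J ⊔ Ideal.span {a}))) = 0 := by
    ext y
    obtain ⟨x, t, rfl⟩ := locQuot_induction s y
    change locQuotMap s _ ((a • 𝟙 (locQuot s J)).hom _) = 0
    rw [hid]
    rw [locQuot_smul_mk, locQuotMap_mk, locQuot_mk_eq_zero]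
    exact ⟨0, by
      simpa using Ideal.mul_mem_right _ _ (Ideal.mem_sup_right (Ideal.mem_span_singleton_self a))⟩
  refine ⟨w, ModuleCat.shortComplex_shortExact _ ?_ ?_ ?_⟩
  · intro y
    constructor
    · intro hy
      obtain ⟨x, t, rfl⟩ := locQuot_induction s y
      change locQuotMap s _ _ = 0 at hy
      rw [locQuotMap_mk, locQuot_mk_eq_zero] at hy
      obtain ⟨m, hm⟩ := hy
      obtain ⟨j, hj, z, hz, hjz⟩ := Submodule.mem_sup.1 hm
      obtain ⟨c, rfl⟩ := Ideal.mem_span_singleton'.1 hz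
      refine ⟨LocalizedModule.mk (Ideal.Quotient.mk J c) (⟨s ^ m, m, rfl⟩ * t), ?_⟩
      change (a • 𝟙 (locQuot s J)).hom _ = _
      rw [hid]
      rw [locQuot_smul_mk]
      rw [← LocalizedModule.mk_cancel_common_left (⟨s ^ m, m, rfl⟩ : Submonoid.powers s) t (Ideal.Quotient.mk J x)]
      congr 1
      change _ = Ideal.Quotient.mk J (s ^ m * x)
      rw [← hjz, Ideal.Quotient.eq]
      have : a * c - (j + c * a) = -j := by ring
      rw [this]
      exact J.neg_mem hj
    · rintro ⟨x, rfl⟩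
      exact congr($w x)
  · change Function.Injective (fun y : locQuot s J => a • y)
    intro y y' hyy
    rw [← sub_eq_zero]
    obtain ⟨x, t, hx⟩ := locQuot_induction s (y - y')
    have h0 : a • (y - y') = 0 := by rw [smul_sub]; exact sub_eq_zero.2 hyy
    rw [hx] at h0 ⊢
    rw [locQuot_smul_mk, locQuot_mk_eq_zero] at h0
    rw [locQuot_mk_eq_zero]
    obtain ⟨m, hm⟩ := h0
    obtain ⟨k, hk⟩ := ha (s ^ m * x) (by convert hm using 1; ring)
    exact ⟨k + m, by convert hk using 1; ring⟩
  · intro y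
    obtain ⟨x, t, rfl⟩ := locQuot_induction s y
    exact ⟨LocalizedModule.mk (Ideal.Quotient.mk J x) t, locQuotMap_mk s _ x t⟩

/-- `Reach s k J K`: `K` is obtained from `J` by adjoining a sequence of `k` elements that is
weakly regular on the localization of `A ⧸ J` at the powers of `s`. -/
inductive Reach {A : Type u} [CommRing A] (s : A) : ℕ → Ideal A → Ideal A → Prop
  | base (J : Ideal A) : Reach s 0 J J
  | step (k : ℕ) (J K : Ideal A) (a : A) (ha : ∀ x, a * x ∈ J → ∃ m : ℕ, s ^ m * x ∈ J)
      (h : Reach s k (J ⊔ Ideal.span {a}) K) : Reach s (k + 1) J K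

theorem Reach.le {A : Type u} [CommRing A] {s : A} {k : ℕ} {J K : Ideal A} (h : Reach s k J K) :
    J ≤ K := by
  induction h with
  | base => exact le_rfl
  | step k J K a ha h ih => exact le_sup_left.trans ih

theorem Reach.pd {A : Type u} [CommRing A] {s : A} {k : ℕ} {J K : Ideal A} (h : Reach s k J K)
    (m : ℕ) (hm : HasProjectiveDimensionLT (locQuot s J) m) :
    HasProjectiveDimensionLT (locQuot s K) (m + k) := by
  induction h generalizing m with
  | base => exact hm
  | step k J K a ha h ih =>
    obtain ⟨w, hS⟩ := locQuot_shortExact s J a ha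
    have := ih (m + 1) (hS.hasProjectiveDimensionLT_X₃ m hm
      (hasProjectiveDimensionLT_of_ge (locQuot s J) m (m+1) (by omega)))
    rwa [show m + (k + 1) = m + 1 + k by omega]

theorem Reach.ext {A : Type u} [CommRing A] {s : A} {k : ℕ} {J K : Ideal A} (h : Reach s k J K)
    (B : ModuleCat.{u} A) (hB : ∀ a ∈ K, ∀ b : B, a • b = 0) (m : ℕ)
    (hm : ¬ Subsingleton (Abelian.Ext.{u} (locQuot s J) B m)) :
    ¬ Subsingleton (Abelian.Ext.{u} (locQuot s K) B (m + k)) := by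
  induction h generalizing m with
  | base => exact hm
  | step k J K a ha h ih =>
    obtain ⟨w, hS⟩ := locQuot_shortExact s J a ha
    have := ih hB (m + 1) (ext_shift a _ w hS B
      (hB a (h.le (Ideal.mem_sup_right (Ideal.mem_span_singleton_self a)))) m hm)
    rwa [show m + (k + 1) = m + 1 + k by omega]

theorem locQuot_bot_pd {A : Type u} [CommRing A] (s : A) :
    HasProjectiveDimensionLT (locQuot s (⊥ : Ideal A)) 2 := by
  open Polynomial in
  let P : A[X] := C s * X - 1
  have hP : ∀ f : A[X], P * f = 0 → f = 0 := by
    intro f hf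
    by_contra hne
    have h2 : f = C s * X * f := by
      have : P * f = C s * X * f - f := by ring
      rw [this, sub_eq_zero] at hf
      exact hf.symm
    have h3 : ∀ n, f.coeff n = 0 := by
      intro n
      induction n with
      | zero => rw [h2, mul_assoc]; simp
      | succ n ih =>
        rw [h2, mul_assoc, coeff_C_mul, coeff_X_mul, ih, mul_zero]
    exact hne (Polynomial.ext (by simpa using h3))
  let f : A[X] →ₗ[A] A[X] := LinearMap.mulLeft A P
  let g : A[X] →ₗ[A] AdjoinRoot P := (AdjoinRoot.mkₐ P).toLinearMap
  have w : ModuleCat.ofHom f ≫ ModuleCat.ofHom g = 0 := by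
    ext y
    change AdjoinRoot.mk P (P * _) = 0
    simp
  have hS : (ShortComplex.mk (ModuleCat.ofHom f) (ModuleCat.ofHom g) w).ShortExact := by
    refine ModuleCat.shortComplex_shortExact _ ?_ ?_ ?_
    · intro y
      change AdjoinRoot.mk P y = 0 ↔ ∃ z, P * z = y
      rw [AdjoinRoot.mk_eq_zero]
      exact ⟨fun ⟨z, hz⟩ => ⟨z, hz.symm⟩, fun ⟨z, hz⟩ => ⟨z, hz.symm⟩⟩
    · change Function.Injective f
      rw [injective_iff_map_eq_zero]
      exact hP
    · exact AdjoinRoot.mk_surjective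
  have hp : Projective (ModuleCat.of A A[X]) :=
    (IsProjective.iff_projective _).1 (inferInstanceAs (Module.Projective A A[X]))
  have h2 := hS.hasProjectiveDimensionLT_X₃ 1 (inferInstanceAs
    (HasProjectiveDimensionLT (ModuleCat.of A A[X]) 1)) (inferInstanceAs
    (HasProjectiveDimensionLT (ModuleCat.of A A[X]) (1 + 1)))
  have : IsLocalization.Away s (AdjoinRoot P) := IsLocalization.adjoin_inv s
  let e1 : (A ⧸ (⊥ : Ideal A)) ≃ₗ[A] A := Submodule.quotEquivOfEqBot _ rfl
  let φ : (A ⧸ (⊥ : Ideal A)) →ₗ[A] AdjoinRoot P := (Algebra.linearMap A (AdjoinRoot P)) ∘ₗ e1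
  have : IsLocalizedModule (Submonoid.powers s) (Algebra.linearMap A (AdjoinRoot P)) :=
    inferInstance
  have : IsLocalizedModule (Submonoid.powers s) φ :=
    IsLocalizedModule.of_linearEquiv_right _ _ _
  let e := IsLocalizedModule.iso (Submonoid.powers s) φ
  exact hasProjectiveDimensionLT_of_iso e.symm.toModuleIso 2

theorem locQuot_ext_ne {A : Type u} [CommRing A] [IsNoetherianRing A] (s : A) (K p q : Ideal A)
    [p.IsPrime] [q.IsPrime] (hKq : K ≤ q) (hqp : q ≤ p) (hsp : s ∈ p) (hsq : s ∉ q) :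
    ∃ B : ModuleCat.{u} A, (∀ a ∈ K, ∀ b : B, a • b = 0) ∧
      ¬ Subsingleton (Abelian.Ext.{u} (locQuot s (⊥ : Ideal A)) B 1) := by
  let g : (ℕ →₀ (A ⧸ K)) →ₗ[A] locQuot s K :=
    Finsupp.lsum A fun i => (LocalizedModule.divBy (⟨s ^ i, i, rfl⟩ : Submonoid.powers s)) ∘ₗ
      (LocalizedModule.mkLinearMap (Submonoid.powers s) (A ⧸ K))
  have hg : ∀ i x, g (Finsupp.single i (Ideal.Quotient.mk K x)) =
      LocalizedModule.mk (Ideal.Quotient.mk K x) (⟨s ^ i, i, rfl⟩ : Submonoid.powers s) := by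
    intro i x
    simp only [g, Finsupp.lsum_single]
    change LocalizedModule.divBy (⟨s ^ i, i, rfl⟩ : Submonoid.powers s)
      (LocalizedModule.mk (Ideal.Quotient.mk K x) 1) = _
    rw [LocalizedModule.divBy_apply, LocalizedModule.liftOn_mk]
    exact congrArg _ (one_mul _)
  have hgs : Function.Surjective g := by
    intro y
    obtain ⟨x, ⟨_, i, rfl⟩, rfl⟩ := locQuot_induction s y
    exact ⟨_, hg i x⟩
  let B : Submodule A (ℕ →₀ (A ⧸ K)) := LinearMap.ker g
  refine ⟨ModuleCat.of A B, ?_, ?_⟩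
  · rintro a ha ⟨b, hb⟩
    apply Subtype.ext
    change a • b = 0
    ext i
    obtain ⟨x, hx⟩ := Ideal.Quotient.mk_surjective (b i)
    rw [Finsupp.smul_apply, ← hx]
    change Ideal.Quotient.mk K (a * x) = 0
    exact Ideal.Quotient.eq_zero_iff_mem.2 (K.mul_mem_right _ ha)
  · intro hs
    have w : ModuleCat.ofHom (X := B) (Y := ℕ →₀ (A ⧸ K)) B.subtype ≫ ModuleCat.ofHom g = 0 := by
      ext y; exact y.2
    have hS : (ShortComplex.mk (ModuleCat.ofHom (X := B) (Y := ℕ →₀ (A ⧸ K)) B.subtype)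
        (ModuleCat.ofHom g) w).ShortExact := by
      refine ModuleCat.shortComplex_shortExact _ ?_ ?_ ?_
      · intro y
        change g y = 0 ↔ ∃ z : B, z.1 = y
        exact ⟨fun h => ⟨⟨y, h⟩, rfl⟩, fun ⟨z, hz⟩ => hz ▸ z.2⟩
      · exact Subtype.val_injective
      · exact hgs
    let π : locQuot s (⊥ : Ideal A) ⟶ locQuot s K := ModuleCat.ofHom (locQuotMap s bot_le)
    obtain ⟨x, hx⟩ := Abelian.Ext.covariant_sequence_exact₃ (locQuot s (⊥ : Ideal A)) hS
      (Abelian.Ext.mk₀ π) (n₁ := 1) rfl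
      (Subsingleton.elim (α := Abelian.Ext.{u} (locQuot s (⊥ : Ideal A)) (ModuleCat.of A B) 1) _ _)
    obtain ⟨f, rfl⟩ := Abelian.Ext.homEquiv₀.symm.surjective x
    have hfg : ∀ y, g (f.hom y) = locQuotMap s bot_le y := by
      have : f ≫ ModuleCat.ofHom g = π := by
        apply Abelian.Ext.homEquiv₀.symm.injective
        change Abelian.Ext.mk₀ _ = Abelian.Ext.mk₀ _
        rw [← hx, ← Abelian.Ext.mk₀_comp_mk₀]
        rfl
      intro y
      exact congr($this y)
    let one : locQuot s (⊥ : Ideal A) := LocalizedModule.mk (Ideal.Quotient.mk ⊥ 1) 1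
    let v : ℕ →₀ (A ⧸ K) := f.hom one
    have hdiv : ∀ k : ℕ, ∃ v' : ℕ →₀ (A ⧸ K), v = s ^ k • v' := by
      intro k
      refine ⟨f.hom (LocalizedModule.mk (Ideal.Quotient.mk ⊥ 1) ⟨s ^ k, k, rfl⟩), ?_⟩
      rw [← map_smul]
      change f.hom one = _
      congr 1
      rw [locQuot_smul_mk]
      change LocalizedModule.mk _ _ = LocalizedModule.mk _ _
      rw [LocalizedModule.mk_eq]
      exact ⟨1, by simp [Submonoid.smul_def, Algebra.smul_def]⟩
    have hcoord : ∀ i, ∃ r ∉ p, r • v i = 0 := by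
      intro i
      have hmem : v i ∈ (⨅ k : ℕ, (Ideal.span {s}) ^ k • ⊤ : Submodule A (A ⧸ K)) := by
        rw [Submodule.mem_iInf]
        intro k
        obtain ⟨v', hv'⟩ := hdiv k
        rw [hv', Finsupp.smul_apply]
        exact Submodule.smul_mem_smul (Ideal.pow_mem_pow (Ideal.mem_span_singleton_self s) k)
          trivial
      rw [Ideal.mem_iInf_smul_pow_eq_bot_iff] at hmem
      obtain ⟨⟨r, hr⟩, hrv⟩ := hmem
      refine ⟨1 - r, ?_, by rw [sub_smul, one_smul]; exact sub_eq_zero.2 hrv.symm⟩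
      intro h1
      have : r ∈ p := (Ideal.span_singleton_le_iff_mem p).2 hsp hr
      exact (Ideal.IsPrime.ne_top ‹p.IsPrime›) ((Ideal.eq_top_iff_one p).2
        (by simpa using p.add_mem h1 this))
    choose r hrp hrv using hcoord
    let R := ∏ i ∈ v.support, r i
    have hR : R ∉ p := by
      intro h
      obtain ⟨i, _, hi⟩ := (Ideal.IsPrime.prod_mem_iff).1 h
      exact hrp i hi
    have hRv : R • v = 0 := by
      ext i
      by_cases hi : i ∈ v.support
      · obtain ⟨c, hc⟩ := Finset.dvd_prod_of_mem r hi
        change (R • v i) = 0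
        rw [show R = c * r i by rw [mul_comm]; exact hc, mul_smul, hrv, smul_zero]
      · change (R • v i) = 0
        rw [Finsupp.notMem_support_iff.1 hi, smul_zero]
    have hz : locQuotMap s (bot_le : ⊥ ≤ K) (R • one) = 0 := by
      rw [← hfg, map_smul]
      change g (R • v) = 0
      rw [hRv, map_zero]
    rw [locQuot_smul_mk, locQuotMap_mk, locQuot_mk_eq_zero] at hz
    obtain ⟨m, hm⟩ := hz
    rcases (‹q.IsPrime›).mem_or_mem (hKq hm) with h | h
    · exact hsq ((‹q.IsPrime›).mem_of_pow_mem _ h)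
    · rw [mul_one] at h
      exact hR (hqp h)

theorem krull_chain {A : Type u} [CommRing A] [IsNoetherianRing A] (q r P : Ideal A) (x : A)
    [hq : q.IsPrime] [hr : r.IsPrime] (hqr : q < r) (hrP : r < P)
    (hP : P ∈ (q ⊔ Ideal.span {x}).minimalPrimes) : False := by
  have hPp : P.IsPrime := hP.1.1
  have h1 := Ideal.map_height_le_one_of_mem_minimalPrimes hP
  let f := Ideal.Quotient.mk q
  have hf : Function.Surjective f := Ideal.Quotient.mk_surjective
  have hk : RingHom.ker f = q := Ideal.mk_ker
  have hlt : ∀ I J : Ideal A, q ≤ I → q ≤ J → I < J → I.map f < J.map f := by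
    intro I J hI hJ hIJ
    refine lt_of_le_not_ge (Ideal.map_mono hIJ.le) fun h => hIJ.not_ge ?_
    have := Ideal.comap_mono (f := f) h
    rwa [Ideal.comap_map_of_surjective' f hf, Ideal.comap_map_of_surjective' f hf, hk,
      sup_eq_left.2 hI, sup_eq_left.2 hJ] at this
  have hrm : (r.map f).IsPrime := Ideal.map_isPrime_of_surjective hf (by rw [hk]; exact hqr.le)
  have hqm : (q.map f).IsPrime := Ideal.map_isPrime_of_surjective hf (by rw [hk])
  have hPm : (P.map f).IsPrime :=
    Ideal.map_isPrime_of_surjective hf (by rw [hk]; exact (hqr.trans hrP).le)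
  have h2 := (Ideal.height_le_iff (n := 1)).1 (by exact_mod_cast h1) (r.map f) hrm
    (hlt r P hqr.le (hqr.trans hrP).le hrP)
  have h3 : (r.map f).height ≤ (0 : ℕ) := by
    have : (r.map f).height = 0 := by simpa [ENat.lt_one_iff_eq_zero] using h2
    simp [this]
  have h4 := Ideal.height_le_iff.1 h3 (q.map f) hqm (hlt q r le_rfl hqr.le hqr)
  simp at h4

theorem avoid_prime {A : Type u} [CommRing A] [IsNoetherianRing A] (q₀ q₁ q₂ : Ideal A) (t : A)
    [hq₀ : q₀.IsPrime] [hq₁ : q₁.IsPrime] [hq₂ : q₂.IsPrime] (h01 : q₀ < q₁) (h12 : q₁ < q₂)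
    (ht : t ∉ q₀) : ∃ q : Ideal A, q.IsPrime ∧ q₀ < q ∧ q < q₂ ∧ t ∉ q := by
  by_cases ht1 : t ∈ q₁
  swap
  · exact ⟨q₁, hq₁, h01, h12, ht1⟩
  let T := (q₀ ⊔ Ideal.span {t}).minimalPrimes
  have hle1 : q₀ ⊔ Ideal.span {t} ≤ q₁ :=
    sup_le h01.le ((Ideal.span_singleton_le_iff_mem _).2 ht1)
  have hTfin : T.Finite := Ideal.finite_minimalPrimes_of_isNoetherianRing A _
  have hnot : ¬ ∃ r ∈ T, q₂ ≤ r := by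
    rintro ⟨r, hr, h2r⟩
    have : r ≤ q₁ := hr.2 ⟨hq₁, hle1⟩ (h12.le.trans h2r)
    exact (h12.trans_le h2r).not_ge this
  have hun := mt (Ideal.subset_union_prime_finite hTfin (f := fun r => r) ⊥ ⊥
    (fun i hi _ _ => hi.1.1) (I := q₂)).1 hnot
  obtain ⟨y, hy2, hyT⟩ := Set.not_subset.1 hun
  have hyT' : ∀ r ∈ T, y ∉ r := by
    intro r hr hyr
    exact hyT (Set.mem_biUnion hr hyr)
  have hy0 : y ∉ q₀ := by
    obtain ⟨r, hr, _⟩ := Ideal.exists_minimalPrimes_le hle1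
    exact fun h => hyT' r hr (hr.1.2 (Ideal.mem_sup_left h))
  obtain ⟨q, hq, hq2⟩ := Ideal.exists_minimalPrimes_le (I := q₀ ⊔ Ideal.span {y}) (J := q₂)
    (sup_le (h01.trans h12).le ((Ideal.span_singleton_le_iff_mem _).2 hy2))
  have hqp : q.IsPrime := hq.1.1
  have h0q : q₀ ≤ q := le_sup_left.trans hq.1.2
  have hyq : y ∈ q := hq.1.2 (Ideal.mem_sup_right (Ideal.mem_span_singleton_self y))
  have htq : t ∉ q := by
    intro htq
    obtain ⟨r, hr, hrq⟩ := Ideal.exists_minimalPrimes_le (I := q₀ ⊔ Ideal.span {t}) (J := q)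
      (sup_le h0q ((Ideal.span_singleton_le_iff_mem _).2 htq))
    have hrp : r.IsPrime := hr.1.1
    have htr : t ∈ r := hr.1.2 (Ideal.mem_sup_right (Ideal.mem_span_singleton_self t))
    refine krull_chain q₀ r q y ?_ ?_ hq
    · exact lt_of_le_not_ge (le_sup_left.trans hr.1.2) fun h => ht (h htr)
    · exact lt_of_le_not_ge hrq fun h => hyT' r hr (h hyq)
  refine ⟨q, hqp, lt_of_le_not_ge h0q fun h => hy0 (h hyq), ?_, htq⟩
  exact lt_of_le_not_ge hq2 fun h => htq (h (h12.le ht1))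

theorem regular_of_avoid {A : Type u} [CommRing A] [IsNoetherianRing A] (I q : Ideal A) (a u : A)
    (ha : a ∉ q) (hu : ∀ P ∈ associatedPrimes A (A ⧸ I), P ≠ q → u ∈ P) (x : A)
    (hx : a * x ∈ I) : ∃ m : ℕ, u ^ m * x ∈ I := by
  by_contra hcon
  push Not at hcon
  let x' : A ⧸ I := Ideal.Quotient.mk I x
  have hax : a • x' = 0 := Ideal.Quotient.eq_zero_iff_mem.2 hx
  have hne : ∀ m : ℕ, u ^ m • x' ≠ 0 := fun m h => hcon m (Ideal.Quotient.eq_zero_iff_mem.1 h)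
  let D : ℕ →o Ideal A := ⟨fun m => (⊥ : Submodule A (A ⧸ I)).colon {u ^ m • x'}, by
    refine monotone_nat_of_le_succ fun m c hc => ?_
    rw [Submodule.mem_colon_singleton, Submodule.mem_bot] at hc ⊢
    rw [pow_succ', mul_smul, smul_comm, hc, smul_zero]⟩
  obtain ⟨m, hm⟩ := monotone_stabilizes_iff_noetherian.2 ‹IsNoetherianRing A› D
  let y : A ⧸ I := u ^ m • x'
  let N : Submodule A (A ⧸ I) := Submodule.span A {y}
  have hyN : y ∈ N := Submodule.mem_span_singleton_self y
  obtain ⟨P, hP, -⟩ := exists_le_isAssociatedPrime_of_isNoetherianRing A (⟨y, hyN⟩ : N)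
    (fun h => hne m (congrArg Subtype.val h))
  have hPI : P ∈ associatedPrimes A (A ⧸ I) :=
    hP.map_of_injective N.subtype Subtype.val_injective
  obtain ⟨hPp, ⟨w, hw⟩, hPw⟩ := isAssociatedPrime_iff.1 hP
  obtain ⟨c, rfl⟩ := Submodule.mem_span_singleton.1 hw
  have hmem : ∀ b, b ∈ P ↔ b • c • y = 0 := by
    intro b
    rw [hPw, Submodule.mem_colon_singleton, Submodule.mem_bot, Subtype.ext_iff]
    rfl
  have haP : a ∈ P := by
    rw [hmem, smul_comm a c, smul_comm a (u ^ m), hax, smul_zero, smul_zero]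
  have huP : u ∈ P := hu P hPI fun h => ha (h ▸ haP)
  have h1 : c ∈ D (m + 1) := by
    change c ∈ (⊥ : Submodule A (A ⧸ I)).colon {u ^ (m + 1) • x'}
    rw [Submodule.mem_colon_singleton, Submodule.mem_bot, pow_succ', mul_smul, smul_comm]
    exact (hmem u).1 huP
  rw [← hm (m + 1) (by omega)] at h1
  change c ∈ (⊥ : Submodule A (A ⧸ I)).colon {u ^ m • x'} at h1
  rw [Submodule.mem_colon_singleton, Submodule.mem_bot] at h1
  exact hPp.ne_top ((Ideal.eq_top_iff_one P).2 ((hmem 1).2 (by rw [one_smul]; exact h1)))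

/-- there is a chain of primes of length `k` from `q` to `p`. -/
def PChain {A : Type u} [CommRing A] (p : Ideal A) : ℕ → Ideal A → Prop
  | 0, q => q = p
  | k + 1, q => ∃ q' : Ideal A, q'.IsPrime ∧ q < q' ∧ PChain p k q'

theorem PChain.le {A : Type u} [CommRing A] {p : Ideal A} {k : ℕ} {q : Ideal A}
    (h : PChain p k q) : q ≤ p := by
  induction k generalizing q with
  | zero => exact le_of_eq h
  | succ k ih =>
    obtain ⟨q', _, hlt, h'⟩ := h
    exact hlt.le.trans (ih h')

theorem exists_reach {A : Type u} [CommRing A] [IsNoetherianRing A] (p : Ideal A) (k : ℕ) :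
    ∀ (I q₀ : Ideal A) (t : A), q₀.IsPrime → I ≤ q₀ → t ∉ q₀ → PChain p (k + 1) q₀ →
    ∃ (s : A) (K q : Ideal A), t ∣ s ∧ s ∈ p ∧ s ∉ q ∧ q.IsPrime ∧ K ≤ q ∧ q ≤ p ∧
      Reach s k I K := by
  induction k with
  | zero =>
    rintro I q₀ t hq₀ hI ht ⟨q', hq', hlt, rfl⟩
    obtain ⟨x, hx, hx0⟩ := SetLike.exists_of_lt hlt
    exact ⟨t * x, I, q₀, dvd_mul_right _ _, Ideal.mul_mem_left _ _ hx,
      fun h => (hq₀.mem_or_mem h).elim ht hx0, hq₀, hI, hlt.le, Reach.base I⟩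
  | succ k ih =>
    rintro I q₀ t hq₀ hI ht ⟨q₁, hq₁, h01, q₂, hq₂, h12, hch⟩
    obtain ⟨q, hqm, hqq⟩ := Ideal.exists_minimalPrimes_le hI
    have hqp : q.IsPrime := hqm.1.1
    have htq : t ∉ q := fun h => ht (hqq h)
    have hfin : (associatedPrimes A (A ⧸ I) \ {q}).Finite :=
      (associatedPrimes.finite A (A ⧸ I)).subset Set.diff_subset
    have hu : ∃ u, u ∉ q ∧ ∀ P ∈ associatedPrimes A (A ⧸ I), P ≠ q → u ∈ P := by
      have hnle : ¬ hfin.toFinset.inf id ≤ q := by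
        rw [Ideal.IsPrime.inf_le' hqp]
        rintro ⟨P, hP, hPq⟩
        rw [Set.Finite.mem_toFinset] at hP
        have hIP : I ≤ P := by
          have := IsAssociatedPrime.annihilator_le hP.1
          rwa [Submodule.annihilator_top, Ideal.annihilator_quotient] at this
        exact hP.2 (le_antisymm hPq (hqm.2 ⟨hP.1.1, hIP⟩ hPq))
      obtain ⟨u, hu, huq⟩ := SetLike.not_le_iff_exists.1 hnle
      refine ⟨u, huq, fun P hP hPq => ?_⟩
      exact (Finset.inf_le (f := id) (hfin.mem_toFinset.2 ⟨hP, hPq⟩) : _ ≤ P) hu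
    obtain ⟨u, huq, hu⟩ := hu
    obtain ⟨q', hq', hqq', hq'2, ht'⟩ := avoid_prime q q₁ q₂ (t * u) (hqq.trans_lt h01) h12
      (fun h => (hqp.mem_or_mem h).elim htq huq)
    obtain ⟨a, haq', haq⟩ := SetLike.exists_of_lt hqq'
    obtain ⟨s, K, r, hts, hsp, hsr, hr, hKr, hrp, hreach⟩ := ih (I ⊔ Ideal.span {a}) q' (t * u) hq'
      (sup_le (hqm.1.2.trans hqq'.le) ((Ideal.span_singleton_le_iff_mem _).2 haq')) ht'
      ⟨q₂, hq₂, hq'2, hch⟩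
    refine ⟨s, K, r, (dvd_mul_right t u).trans hts, hsp, hsr, hr, hKr, hrp,
      Reach.step k I K a ?_ hreach⟩
    intro x hx
    obtain ⟨m, hm⟩ := regular_of_avoid I q a u haq hu x hx
    obtain ⟨c, hc⟩ := (dvd_mul_left u t).trans hts
    refine ⟨m, ?_⟩
    rw [hc, mul_pow, mul_right_comm]
    exact I.mul_mem_right _ hm

theorem exists_pchain {A : Type u} [CommRing A] (n : ℕ) :
    ∀ l : LTSeries (PrimeSpectrum A), l.length = n → ∃ p : Ideal A, p.IsPrime ∧
      PChain p n l.head.asIdeal := by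
  induction n with
  | zero =>
    intro l hl
    exact ⟨l.head.asIdeal, l.head.2, rfl⟩
  | succ n ih =>
    intro l hl
    obtain ⟨p, hp, hc⟩ := ih (l.tail (by omega)) (by simp [hl])
    refine ⟨p, hp, _, (l.tail (by omega)).head.2, ?_, hc⟩
    rw [RelSeries.head_tail]
    have this : l.head < l ⟨1, by omega⟩ := l.strictMono (by simp [Fin.lt_def])
    have h1 : (1 : Fin (l.length + 1)) = ⟨1, by omega⟩ := by
      apply Fin.ext
      rw [Fin.val_one']
      exact Nat.mod_eq_of_lt (by omega)
    rw [h1]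
    exact this

theorem exists_module_projDim_eq
    (A : Type u) [CommRing A] [IsNoetherianRing A] [Nontrivial A]
    (n : ℕ) (hn : (n : WithBot ℕ∞) ≤ ringKrullDim A) :
    ∃ M : ModuleCat.{u} A, projDim A M = (n : ℕ∞) := by
  obtain _ | n := n
  · exact ⟨ModuleCat.of A A, projDim_zero_of A _
      ((IsProjective.iff_projective _).1 (inferInstanceAs (Module.Projective A A)))⟩
  · obtain ⟨l, hl⟩ := Order.le_krullDim_iff.1 hn
    obtain ⟨p, hp, hc⟩ := exists_pchain (n + 1) l hl
    have hq₀ := l.head.2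
    obtain ⟨s, K, q, -, hsp, hsq, hq, hKq, hqp, hreach⟩ := exists_reach p n ⊥ l.head.asIdeal 1 hq₀
      bot_le (fun h => hq₀.ne_top ((Ideal.eq_top_iff_one _).2 h)) hc
    obtain ⟨B, hB, hext⟩ := locQuot_ext_ne s K p q hKq hqp hsp hsq
    refine ⟨locQuot s K, projDim_eq_of A _ B n ?_ ?_⟩
    · rw [add_comm]
      exact hreach.pd 2 (locQuot_bot_pd s)
    · rw [add_comm]
      exact hreach.ext B hB 1 hext
end

section
/- Let A be a commutative noetherian ring of Krull dimension at least 1 (possibly infinite). Then for every natural number n with 1 ≤ n ≤ dim(A) there exists a prime ideal p of A such that the localization A_p is a Cohen–Macaulay local ring, the height of p equals n − 1, and dim(A/p) ≥ 1. -/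
/-!
STATEMENT 8: Let A be a commutative noetherian ring of Krull dimension at least 1
(possibly infinite).  Then for every natural number n with 1 ≤ n ≤ dim(A) there exists a
prime ideal p of A such that the localization A_p is a Cohen–Macaulay local ring, the
height of p (i.e. the Krull dimension of A_p) equals n − 1, and dim(A/p) ≥ 1.
-/

open CategoryTheory

universe u

/-- The depth of a commutative local ring `A`: the least `i : ℕ` such that
`Ext_A^i(k, A) ≠ 0`, where `k` is the residue field of `A` (`∞` if no such `i` exists). -/
noncomputable def ringDepth (A : Type u) [CommRing A] [IsLocalRing A] : ℕ∞ :=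
  sInf {n : ℕ∞ | ∃ i : ℕ, (i : ℕ∞) = n ∧
    ¬ Subsingleton
      (extGroup A (ModuleCat.of A (IsLocalRing.ResidueField A)) (ModuleCat.of A A) i)}

/-- A commutative noetherian local ring is Cohen–Macaulay if its depth equals its Krull
dimension. -/
def IsCohenMacaulayLocalRing (R : Type u) [CommRing R] [IsLocalRing R] : Prop :=
  (ringDepth R : WithBot ℕ∞) = ringKrullDim R

namespace CMAux

open RingTheory.Sequence Ideal IsLocalRing

/-- Old-style `Ext` vanishes iff the derived-category `Ext` vanishes. -/
lemma subsingleton_extGroup_iff (R : Type u) [CommRing R] (M N : ModuleCat.{u} R) (i : ℕ) :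
    Subsingleton (extGroup R M N i) ↔ Subsingleton (Abelian.Ext.{u} M N i) := by
  obtain ⟨P⟩ : Nonempty (ProjectiveResolution M) := HasProjectiveResolution.out
  rw [← ModuleCat.isZero_iff_subsingleton, (P.isoExt (R := R) i N).isZero_iff,
    ← HomologicalComplex.exactAt_iff_isZero_homology]
  cases i with
  | zero =>
    rw [HomologicalComplex.exactAt_iff' _ 0 0 1 (by simp) (by simp),
      ShortComplex.moduleCat_exact_iff, Abelian.Ext.addEquiv₀.subsingleton_congr]
    constructor
    · intro h
      refine ⟨fun a b ↦ ?_⟩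
      have key : ∀ a : ((ChainComplex.single₀ (ModuleCat.{u} R)).obj M).X 0 ⟶ N, a = 0 := by
        intro a
        have h0 : P.complex.d 1 0 ≫ P.π.f 0 ≫ a = 0 := by
          rw [← Category.assoc, P.complex_d_comp_π_f_zero, Limits.zero_comp]
        obtain ⟨g, hg⟩ := h (P.π.f 0 ≫ a) h0
        have h2 : P.complex.d 0 0 ≫ (show (P.complex.X 0 ⟶ N) from g) = P.π.f 0 ≫ a := hg
        rw [P.complex.shape 0 0 (by simp), Limits.zero_comp] at h2
        rw [← cancel_epi (P.π.f 0), ← h2, Limits.comp_zero]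
      exact (key a).trans (key b).symm
    · intro h f hf
      replace hf : P.complex.d 1 0 ≫ (show (P.complex.X 0 ⟶ N) from f) = 0 := hf
      obtain ⟨l, hl⟩ := Limits.CokernelCofork.IsColimit.desc' P.isColimitCokernelCofork _ hf
      have hl0 : l = 0 := Subsingleton.elim (α := (M ⟶ N)) _ _
      refine ⟨0, ?_⟩
      rw [map_zero]
      rw [hl0] at hl
      exact (Limits.comp_zero.symm.trans hl)
  | succ i =>
    rw [HomologicalComplex.exactAt_iff' _ i (i+1) (i+2) (by simp) (by simp),
      ShortComplex.moduleCat_exact_iff]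
    constructor
    · intro h
      refine subsingleton_of_forall_eq 0 fun α ↦ ?_
      obtain ⟨f, hf, rfl⟩ := P.extMk_surjective α (i+2) rfl
      rw [P.extMk_eq_zero_iff f _ rfl hf i rfl]
      exact h f hf
    · intro h f hf
      exact (P.extMk_eq_zero_iff (show (P.complex.X (i+1) ⟶ N) from f) (i+2) rfl hf i rfl).1
        (Subsingleton.elim _ _)

/-- A local ring with a regular sequence of length its dimension is Cohen–Macaulay. -/
lemma isCM_of_isRegular (R : Type u) [CommRing R] [IsNoetherianRing R] [IsLocalRing R]
    (rs : List R) (hmem : ∀ r ∈ rs, r ∈ maximalIdeal R) (hreg : IsRegular R rs)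
    (hdim : ringKrullDim R = rs.length) : IsCohenMacaulayLocalRing R := by
  have hlt : maximalIdeal R • (⊤ : Submodule R (ModuleCat.of R R)) < ⊤ := by
    change maximalIdeal R • (⊤ : Ideal R) < ⊤
    simpa [lt_top_iff_ne_top] using (maximalIdeal.isMaximal R).ne_top
  have hfin : Module.Finite R (ModuleCat.of R (ResidueField R)) :=
    inferInstanceAs (Module.Finite R (R ⧸ maximalIdeal R))
  have hsupp : Module.support R (ModuleCat.of R (ResidueField R)) =
      PrimeSpectrum.zeroLocus (maximalIdeal R) := by
    change Module.support R (R ⧸ maximalIdeal R) = _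
    rw [Module.support_eq_zeroLocus, annihilator_quotient]
  have h1 : ∀ i < rs.length, Subsingleton
      (extGroup R (ModuleCat.of R (ResidueField R)) (ModuleCat.of R R) i) := by
    intro i hi
    rw [subsingleton_extGroup_iff]
    exact ModuleCat.subsingleton_ext_of_exists_isRegular (maximalIdeal R) _ hsupp.subset
      (ModuleCat.of R R) hlt rs hmem hreg i hi
  have h2 : ¬ Subsingleton
      (extGroup R (ModuleCat.of R (ResidueField R)) (ModuleCat.of R R) rs.length) := by
    intro h
    obtain ⟨rs', hlen, hmem', hreg'⟩ := ModuleCat.exists_isRegular_of_exists_subsingleton_ext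
      (maximalIdeal R) (rs.length + 1) (ModuleCat.of R R) hlt
      (ModuleCat.of R (ResidueField R)) hsupp (by
        intro i hi
        rw [← subsingleton_extGroup_iff]
        rcases Nat.lt_succ_iff_lt_or_eq.1 hi with hi | rfl
        · exact h1 i hi
        · exact h)
    have h3 := ringKrullDim_add_length_eq_ringKrullDim_of_isRegular rs' hreg'
    have hne : Nontrivial (R ⧸ ofList rs') := by
      have := hreg'.quot_ofList_smul_nontrivial ⊤
      refine Ideal.Quotient.nontrivial_iff.2 fun h ↦ hreg'.2 ?_
      rw [h]; simp
    have h4 : 0 ≤ ringKrullDim (R ⧸ ofList rs') := ringKrullDim_nonneg_of_nontrivial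
    rw [hdim, hlen] at h3
    have h5 : ((rs.length + 1 : ℕ) : WithBot ℕ∞) ≤ rs.length := by
      rw [← h3]
      exact le_add_of_nonneg_left h4
    have h6 : rs.length + 1 ≤ rs.length := by exact_mod_cast h5
    omega
  have h7 : ringDepth R = rs.length := by
    apply le_antisymm
    · exact sInf_le ⟨_, rfl, h2⟩
    · refine le_sInf ?_
      rintro _ ⟨i, rfl, hi⟩
      by_contra hc
      exact hi (h1 i (by simpa using hc))
  rw [IsCohenMacaulayLocalRing, h7, hdim]
  rfl

lemma exists_filter_regular (A : Type u) [CommRing A] [IsNoetherianRing A] (q : Ideal A)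
    [q.IsPrime] (k : ℕ) (M : Type u) [AddCommGroup M] [Module A M] [Module.Finite A M] :
    ∃ rs : List A, rs.length = k ∧ (∀ r ∈ rs, r ∈ q) ∧ ∀ (p : Ideal A) [p.IsPrime], p < q →
      ∀ (N : Type u) [AddCommGroup N] [Module A N] [Module (Localization.AtPrime p) N]
      [IsScalarTower A (Localization.AtPrime p) N] (f : M →ₗ[A] N),
      IsBaseChange (Localization.AtPrime p) f →
      IsWeaklyRegular N (rs.map (algebraMap A (Localization.AtPrime p))) := by
  induction k generalizing M with
  | zero => exact ⟨[], by simp⟩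
  | succ k ih =>
    obtain ⟨x, hxq, hx⟩ : ∃ x ∈ q, ∀ P ∈ associatedPrimes A M, ¬ q ≤ P → x ∉ P := by
      by_contra! hcon
      have hfin : {P ∈ associatedPrimes A M | ¬ q ≤ P}.Finite :=
        (associatedPrimes.finite A M).subset (Set.sep_subset _ _)
      obtain ⟨P, hP, hqP⟩ := (q.subset_union_prime_finite hfin (f := id) 0 0
        fun _ h _ _ ↦ h.1.isPrime).1 (by
          intro x hx
          obtain ⟨P, h1, h2, h3⟩ := hcon x hx
          exact Set.mem_biUnion (show P ∈ {P ∈ associatedPrimes A M | ¬ q ≤ P} from ⟨h1, h2⟩) h3)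
      exact hP.2 hqP
    obtain ⟨rs, hlen, hmem, hrs⟩ := ih (QuotSMulTop x M)
    refine ⟨x :: rs, by simp [hlen], by simpa using ⟨hxq, hmem⟩, ?_⟩
    intro p _ hpq N _ _ _ _ f hf
    rw [List.map_cons, isWeaklyRegular_cons_iff]
    constructor
    · by_contra hnr
      have hloc : IsLocalizedModule p.primeCompl f :=
        (isLocalizedModule_iff_isBaseChange p.primeCompl (Localization.AtPrime p) f).2 hf
      have hz : algebraMap A (Localization.AtPrime p) x ∈
          {r : Localization.AtPrime p | ∃ y : N, y ≠ 0 ∧ r • y = 0} := by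
        by_contra h
        apply hnr
        rw [isSMulRegular_iff_right_eq_zero_of_smul]
        intro y hy
        by_contra hy0
        exact h ⟨y, hy0, hy⟩
      rw [← biUnion_associatedPrimes_eq_zero_divisors] at hz
      obtain ⟨Q, hQ, hxQ⟩ := Set.mem_iUnion₂.1 hz
      have hQ' := hQ
      rw [← Module.associatedPrimes.preimage_comap_associatedPrimes_eq_associatedPrimes_of_isLocalizedModule
        (R := A) p.primeCompl (Localization.AtPrime p) f] at hQ
      have hle : Q.comap (algebraMap A (Localization.AtPrime p)) ≤ p := by
        have h1 : Q ≤ maximalIdeal _ := le_maximalIdeal hQ'.isPrime.ne_top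
        refine (Ideal.comap_mono h1).trans ?_
        exact (Localization.AtPrime.under_maximalIdeal (I := p)).le
      exact hx _ hQ (fun h ↦ (h.trans hle).not_gt hpq) hxQ
    · have e := (QuotSMulTop.algebraMapTensorEquivTensorQuotSMulTop x M
        (Localization.AtPrime p)).symm ≪≫ₗ
        QuotSMulTop.congr ((algebraMap A (Localization.AtPrime p)) x) hf.equiv
      have hg : IsBaseChange (Localization.AtPrime p) <|
          e.toLinearMap.restrictScalars A ∘ₗ
            TensorProduct.mk A (Localization.AtPrime p) (QuotSMulTop x M) 1 :=
        IsBaseChange.of_equiv e (fun _ ↦ by simp)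
      exact hrs p hpq _ _ hg

end CMAux

open CMAux RingTheory.Sequence in
theorem exists_prime_cohenMacaulay_localization_of_height
    (A : Type u) [CommRing A] [IsNoetherianRing A]
    (hdim : 1 ≤ ringKrullDim A)
    (n : ℕ) (hn1 : 1 ≤ n) (hn : (n : WithBot ℕ∞) ≤ ringKrullDim A) :
    ∃ (p : Ideal A) (hp : p.IsPrime),
      letI := hp
      IsCohenMacaulayLocalRing (Localization.AtPrime p) ∧
      ringKrullDim (Localization.AtPrime p) = ((n - 1 : ℕ) : WithBot ℕ∞) ∧
      1 ≤ ringKrullDim (A ⧸ p) := by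
  classical
  obtain ⟨l, hl⟩ := Order.le_krullDim_iff.1 hn
  obtain ⟨q, hq, hqn⟩ : ∃ q : Ideal A, q.IsPrime ∧ (n : ℕ∞) ≤ q.height := by
    refine ⟨l.last.asIdeal, l.last.isPrime, ?_⟩
    rw [PrimeSpectrum.height_eq_orderHeight, ← hl]
    exact Order.length_le_height_last
  obtain ⟨rs, hlen, hmem, hrs⟩ := exists_filter_regular A q (n - 1) A
  have hIq : Ideal.ofList rs ≤ q := Ideal.span_le.2 hmem
  obtain ⟨p, hpmin, hpq⟩ := Ideal.exists_minimalPrimes_le hIq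
  have hp : p.IsPrime := hpmin.isPrime
  have hpht : p.height ≤ (n - 1 : ℕ) := by
    have h1 : Ideal.ofList rs = Ideal.span (rs.toFinset : Set A) := by
      simp [Ideal.ofList]
    rw [h1] at hpmin
    refine (Ideal.height_le_card_of_mem_minimalPrimes_span_finset hpmin).trans ?_
    rw [← hlen]
    exact_mod_cast rs.toFinset_card_le
  have hlt : p < q := by
    refine lt_of_le_of_ne hpq ?_
    rintro rfl
    have : n ≤ n - 1 := by exact_mod_cast hqn.trans hpht
    omega
  have hwr : IsWeaklyRegular (Localization.AtPrime p)
      (rs.map (algebraMap A (Localization.AtPrime p))) :=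
    hrs p hlt _ _ (IsBaseChange.linearMap A (Localization.AtPrime p))
  have hmm : ∀ r ∈ rs.map (algebraMap A (Localization.AtPrime p)),
      r ∈ IsLocalRing.maximalIdeal (Localization.AtPrime p) := by
    intro r hr
    obtain ⟨a, ha, rfl⟩ := List.mem_map.1 hr
    rw [IsLocalization.AtPrime.to_map_mem_maximal_iff _ p]
    exact hpmin.1.2 (Ideal.subset_span ha)
  have hreg : IsRegular (Localization.AtPrime p)
      (rs.map (algebraMap A (Localization.AtPrime p))) :=
    (IsLocalRing.isRegular_iff_isWeaklyRegular_of_subset_maximalIdeal hmm).2 hwr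
  have hdimp : ringKrullDim (Localization.AtPrime p) = ((n - 1 : ℕ) : WithBot ℕ∞) := by
    apply le_antisymm
    · rw [IsLocalization.AtPrime.ringKrullDim_eq_height p]
      exact WithBot.coe_le_coe.2 hpht
    · have h3 := ringKrullDim_add_length_eq_ringKrullDim_of_isRegular _ hreg
      have hne : Nontrivial (Localization.AtPrime p ⧸
          Ideal.ofList (rs.map (algebraMap A (Localization.AtPrime p)))) := by
        refine Ideal.Quotient.nontrivial_iff.2 fun h ↦ hreg.2 ?_
        rw [h]; simp
      rw [← h3, List.length_map, hlen]
      exact le_add_of_nonneg_left ringKrullDim_nonneg_of_nontrivial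
  refine ⟨p, hp, ?_, hdimp, ?_⟩
  · exact isCM_of_isRegular _ _ hmm hreg (by rw [hdimp, List.length_map, hlen])
  · rw [ringKrullDim_quotient, Order.one_le_krullDim_iff]
    exact ⟨⟨⟨p, hp⟩, le_refl p⟩, ⟨⟨q, hq⟩, hpq⟩, hlt⟩
end

section
/- Let A be a commutative noetherian ring and let E be a faithfully injective A-module. Then for every A-module M, the injective dimension of Hom_A(M, E) over A equals the flat dimension of M over A. -/
/-!
STATEMENT 9: Let A be a commutative noetherian ring and let E be a faithfully injective
A-module.  Then for every A-module M, the injective dimension of Hom_A(M, E) over A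
equals the flat dimension of M over A.
-/

open CategoryTheory

universe u

/-- `Tor^A_i(N, M)` as an `A`-module. -/
noncomputable abbrev torGroup (A : Type u) [CommRing A] (N M : ModuleCat.{u} A) (i : ℕ) :
    ModuleCat A :=
  ((Tor (ModuleCat.{u} A) i).obj N).obj M

/-- The flat dimension of an `A`-module `M`, defined as the least `n : ℕ∞` such that
`Tor^A_i(N, M) = 0` for every `A`-module `N` and every `i > n` (and `∞` if no such `n` exists). -/
noncomputable def flatDim (A : Type u) [CommRing A] (M : ModuleCat.{u} A) : ℕ∞ :=
  sInf {n : ℕ∞ | ∀ (N : ModuleCat.{u} A) (i : ℕ), n < (i : ℕ∞) →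
    Subsingleton (torGroup A N M i)}

/-- The injective dimension of an `A`-module `M`, defined as the least `n : ℕ∞` such that
`Ext_A^i(N, M) = 0` for every `A`-module `N` and every `i > n` (and `∞` if no such `n` exists). -/
noncomputable def injDim (A : Type u) [CommRing A] (M : ModuleCat.{u} A) : ℕ∞ :=
  sInf {n : ℕ∞ | ∀ (N : ModuleCat.{u} A) (i : ℕ), n < (i : ℕ∞) →
    Subsingleton (extGroup A N M i)}

open TensorProduct CategoryTheory.Limits

section lin

variable {A : Type u} [CommRing A]

/-- One direction of the symmetry of `Tor₁` (vanishing form). -/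
lemma aux_snake {K P M Z Q N : Type u} [AddCommGroup K] [AddCommGroup P] [AddCommGroup M]
    [AddCommGroup Z] [AddCommGroup Q] [AddCommGroup N]
    [Module A K] [Module A P] [Module A M] [Module A Z] [Module A Q] [Module A N]
    [Module.Flat A P]
    (f : K →ₗ[A] P) (g : P →ₗ[A] M) (hfg : Function.Exact f g) (hg : Function.Surjective g)
    (k : Z →ₗ[A] Q) (q : Q →ₗ[A] N) (hk : Function.Injective k) (hkq : Function.Exact k q)
    (hq : Function.Surjective q)
    (h : Function.Injective (f.lTensor N)) : Function.Injective (k.rTensor M) := by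
  rw [injective_iff_map_eq_zero]
  intro x hx
  obtain ⟨y, rfl⟩ := LinearMap.lTensor_surjective Z hg x
  have c1 : ∀ y, k.rTensor M (g.lTensor Z y) = g.lTensor Q (k.rTensor P y) := fun y => by
    rw [← LinearMap.comp_apply, ← LinearMap.comp_apply, LinearMap.rTensor_comp_lTensor,
      LinearMap.lTensor_comp_rTensor]
  have c2 : ∀ y, q.rTensor P (f.lTensor Q y) = f.lTensor N (q.rTensor K y) := fun y => by
    rw [← LinearMap.comp_apply, ← LinearMap.comp_apply, LinearMap.rTensor_comp_lTensor,
      LinearMap.lTensor_comp_rTensor]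
  have c3 : ∀ y, k.rTensor P (f.lTensor Z y) = f.lTensor Q (k.rTensor K y) := fun y => by
    rw [← LinearMap.comp_apply, ← LinearMap.comp_apply, LinearMap.rTensor_comp_lTensor,
      LinearMap.lTensor_comp_rTensor]
  rw [c1] at hx
  obtain ⟨w, hw⟩ := (lTensor_exact Q hfg hg _).1 hx
  have h1 : q.rTensor K w = 0 := by
    apply h
    rw [← c2, hw, map_zero]
    exact (rTensor_exact P hkq hq).apply_apply_eq_zero _
  obtain ⟨v, rfl⟩ := (rTensor_exact K hkq hq _).1 h1
  rw [← c3] at hw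
  have := Module.Flat.rTensor_preserves_injective_linearMap (M := P) k hk hw
  rw [← this]
  exact (lTensor_exact Z hfg hg).apply_apply_eq_zero _

lemma aux_comm_inj {K P N : Type u} [AddCommGroup K] [AddCommGroup P] [AddCommGroup N]
    [Module A K] [Module A P] [Module A N] (f : K →ₗ[A] P) :
    Function.Injective (f.rTensor N) ↔ Function.Injective (f.lTensor N) :=
  (f.lTensor_inj_iff_rTensor_inj N).symm

lemma aux_snake_iff {K P M Z Q N : Type u} [AddCommGroup K] [AddCommGroup P] [AddCommGroup M]
    [AddCommGroup Z] [AddCommGroup Q] [AddCommGroup N]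
    [Module A K] [Module A P] [Module A M] [Module A Z] [Module A Q] [Module A N]
    [Module.Flat A P] [Module.Flat A Q]
    (f : K →ₗ[A] P) (g : P →ₗ[A] M) (hf : Function.Injective f)
    (hfg : Function.Exact f g) (hg : Function.Surjective g)
    (k : Z →ₗ[A] Q) (q : Q →ₗ[A] N) (hk : Function.Injective k) (hkq : Function.Exact k q)
    (hq : Function.Surjective q) :
    Function.Injective (f.lTensor N) ↔ Function.Injective (k.rTensor M) := by
  refine ⟨aux_snake f g hfg hg k q hk hkq hq, fun h => ?_⟩
  rw [← aux_comm_inj]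
  rw [aux_comm_inj] at h
  exact aux_snake k q hkq hq f g hf hfg hg h

/-- Dimension shift. -/
lemma aux_shift {K P Z Q : Type u} [AddCommGroup K] [AddCommGroup P]
    [AddCommGroup Z] [AddCommGroup Q]
    [Module A K] [Module A P] [Module A Z] [Module A Q]
    [Module.Flat A P] [Module.Flat A Q]
    (f : K →ₗ[A] P) (hf : Function.Injective f)
    (k : Z →ₗ[A] Q) (hk : Function.Injective k) :
    Function.Injective (f.lTensor Z) ↔ Function.Injective (k.rTensor K) := by
  have h1 := Module.Flat.rTensor_preserves_injective_linearMap (M := P) k hk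
  have h2 := Module.Flat.lTensor_preserves_injective_linearMap (M := Q) f hf
  have c3 : (k.rTensor P) ∘ (f.lTensor Z) = (f.lTensor Q) ∘ (k.rTensor K) := by
    rw [← LinearMap.coe_comp, ← LinearMap.coe_comp, LinearMap.rTensor_comp_lTensor,
      LinearMap.lTensor_comp_rTensor]
  rw [← h1.of_comp_iff, c3, h2.of_comp_iff]

/-- Ladder. -/
lemma aux_ladder (X S Y R : ℕ → ModuleCat.{u} A)
    (s : ∀ i, S (i+1) →ₗ[A] X i) (p : ∀ i, X i →ₗ[A] S i)
    (r : ∀ i, R (i+1) →ₗ[A] Y i) (q : ∀ i, Y i →ₗ[A] R i)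
    (hX : ∀ i, Module.Flat A (X i)) (hY : ∀ i, Module.Flat A (Y i))
    (hs : ∀ i, Function.Injective (s i)) (hr : ∀ i, Function.Injective (r i))
    (hp : ∀ i, Function.Surjective (p i)) (hq : ∀ i, Function.Surjective (q i))
    (hsp : ∀ i, Function.Exact (s i) (p i)) (hrq : ∀ i, Function.Exact (r i) (q i)) (i j : ℕ) :
    Function.Injective ((s i).lTensor (R j)) ↔ Function.Injective ((r (i+j)).rTensor (S 0)) := by
  induction i generalizing j with
  | zero =>
    obtain ⟨n, hn⟩ : ∃ n, n = 0 + j := ⟨_, rfl⟩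
    rw [← hn]
    obtain rfl : n = j := by omega
    exact aux_snake_iff (s 0) (p 0) (hs _) (hsp _) (hp _) (r n) (q n) (hr _) (hrq _) (hq _)
  | succ i ih =>
    rw [aux_snake_iff (s (i+1)) (p (i+1)) (hs _) (hsp _) (hp _) (r j) (q j) (hr _) (hrq _) (hq _),
      ← aux_shift (s i) (hs i) (r j) (hr j), ih (j+1)]
    have : i + (j + 1) = i + 1 + j := by omega
    rw [this]

/-- exactness vs. injectivity of the map from the cokernel -/
lemma aux_exact_iff {X Y W : Type u} [AddCommGroup X] [AddCommGroup Y] [AddCommGroup W]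
    [Module A X] [Module A Y] [Module A W] (N : Type u) [AddCommGroup N] [Module A N]
    (f : X →ₗ[A] Y) (g : Y →ₗ[A] W) (S : Type u) [AddCommGroup S] [Module A S]
    (p : Y →ₗ[A] S) (s : S →ₗ[A] W) (hp : Function.Surjective p) (hfp : Function.Exact f p)
    (hg : s ∘ₗ p = g) :
    Function.Exact (f.lTensor N) (g.lTensor N) ↔ Function.Injective (s.lTensor N) := by
  subst hg
  have e := lTensor_exact N hfp hp
  rw [LinearMap.lTensor_comp]
  constructor
  · intro h
    rw [injective_iff_map_eq_zero]
    intro x hx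
    obtain ⟨y, rfl⟩ := LinearMap.lTensor_surjective N hp x
    obtain ⟨z, rfl⟩ := (h y).1 hx
    exact e.apply_apply_eq_zero z
  · intro h y
    rw [← e y, LinearMap.comp_apply, map_eq_zero_iff _ h]

/-- A faithfully injective module detects exactness. -/
lemma aux_dual_exact (E : Type u) [AddCommGroup E] [Module A E]
    (hinj : Module.Injective A E)
    (hfaith : ∀ (M : Type u) [AddCommGroup M] [Module A M],
      Subsingleton (M →ₗ[A] E) → Subsingleton M)
    {X Y W : Type u} [AddCommGroup X] [AddCommGroup Y] [AddCommGroup W]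
    [Module A X] [Module A Y] [Module A W] (f : X →ₗ[A] Y) (g : Y →ₗ[A] W)
    (h0 : g ∘ₗ f = 0) :
    Function.Exact f g ↔ ∀ φ : Y →ₗ[A] E, φ ∘ₗ f = 0 → ∃ χ : W →ₗ[A] E, χ ∘ₗ g = φ := by
  constructor
  · intro h φ hφ
    have hle : LinearMap.ker g ≤ LinearMap.ker φ := by
      intro y hy
      obtain ⟨x, rfl⟩ := (h y).1 hy
      exact LinearMap.congr_fun hφ x
    obtain ⟨χ, hχ⟩ := hinj.out ((LinearMap.ker g).liftQ g le_rfl)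
      (LinearMap.ker_eq_bot.1 (Submodule.ker_liftQ_eq_bot' _ _ rfl))
      ((LinearMap.ker g).liftQ φ hle)
    refine ⟨χ, LinearMap.ext fun y => ?_⟩
    simpa using hχ (Submodule.Quotient.mk y)
  · intro h
    have hle : LinearMap.range f ≤ LinearMap.ker g := LinearMap.range_le_ker_iff.2 h0
    let H := (LinearMap.ker g).map (LinearMap.range f).mkQ
    have : Subsingleton H := by
      apply hfaith
      refine subsingleton_of_forall_eq 0 fun φ => ?_
      obtain ⟨ψ, hψ⟩ := hinj.out H.subtype H.injective_subtype φ
      obtain ⟨χ, hχ⟩ := h (ψ ∘ₗ (LinearMap.range f).mkQ) (by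
        ext x
        have : (Submodule.Quotient.mk (f x) : Y ⧸ LinearMap.range f) = 0 :=
          (Submodule.Quotient.mk_eq_zero _).2 ⟨x, rfl⟩
        simp [this])
      ext ⟨z, y, hy, rfl⟩
      rw [← hψ]
      have := LinearMap.congr_fun hχ y
      simp only [LinearMap.comp_apply] at this
      rw [LinearMap.mem_ker.1 hy, map_zero] at this
      simpa using this.symm
    intro y
    refine ⟨fun hy => ?_, ?_⟩
    · have := congrArg Subtype.val
        (Subsingleton.elim (⟨(LinearMap.range f).mkQ y, y, hy, rfl⟩ : H) 0)
      exact (Submodule.Quotient.mk_eq_zero _).1 this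
    · rintro ⟨x, rfl⟩
      exact LinearMap.congr_fun h0 x

end lin

section cat

variable {A : Type u} [CommRing A]

lemma tor_iff (N M : ModuleCat.{u} A) (P : ProjectiveResolution M) (i : ℕ) :
    Subsingleton (torGroup A N M (i+1)) ↔
      Function.Exact ((P.complex.d (i+2) (i+1)).hom.lTensor N)
        ((P.complex.d (i+1) i).hom.lTensor N) := by
  rw [← ModuleCat.isZero_iff_subsingleton,
    show IsZero (torGroup A N M (i+1)) ↔ _ from
      (P.isoLeftDerivedObj ((MonoidalCategory.tensoringLeft (ModuleCat.{u} A)).obj N)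
      (i+1)).isZero_iff]
  erw [← HomologicalComplex.exactAt_iff_isZero_homology]
  rw [HomologicalComplex.exactAt_iff' _ (i+2) (i+1) i (by simp) (by simp),
    ShortComplex.ShortExact.moduleCat_exact_iff_function_exact]
  rfl

lemma ext_iff' (N H : ModuleCat.{u} A) (P : ProjectiveResolution N) (i : ℕ) :
    Subsingleton (extGroup A N H (i+1)) ↔
      ∀ φ : P.complex.X (i+1) →ₗ[A] H, φ ∘ₗ (P.complex.d (i+2) (i+1)).hom = 0 →
        ∃ χ : P.complex.X i →ₗ[A] H, χ ∘ₗ (P.complex.d (i+1) i).hom = φ := by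
  rw [← ModuleCat.isZero_iff_subsingleton, (P.isoExt (R := A) (i+1) H).isZero_iff,
    ← HomologicalComplex.exactAt_iff_isZero_homology,
    HomologicalComplex.exactAt_iff' _ i (i+1) (i+2) (by simp) (by simp),
    ShortComplex.moduleCat_exact_iff]
  constructor
  · intro h φ hφ
    obtain ⟨χ, hχ⟩ := h (ModuleCat.ofHom φ) (ModuleCat.hom_ext hφ)
    exact ⟨ModuleCat.Hom.hom χ, congrArg ModuleCat.Hom.hom hχ⟩
  · intro h φ hφ
    obtain ⟨χ, hχ⟩ := h (ModuleCat.Hom.hom φ) (congrArg ModuleCat.Hom.hom hφ)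
    exact ⟨ModuleCat.ofHom χ, ModuleCat.hom_ext hχ⟩

lemma ext_hom_iff (E : Type u) [AddCommGroup E] [Module A E]
    (hinj : Module.Injective A E)
    (hfaith : ∀ (M : Type u) [AddCommGroup M] [Module A M],
      Subsingleton (M →ₗ[A] E) → Subsingleton M)
    (M N : ModuleCat.{u} A) (P : ProjectiveResolution N) (i : ℕ) :
    Subsingleton (extGroup A N (ModuleCat.of A (M →ₗ[A] E)) (i+1)) ↔
      Function.Exact ((P.complex.d (i+2) (i+1)).hom.rTensor M)
        ((P.complex.d (i+1) i).hom.rTensor M) := by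
  have h0 : (P.complex.d (i+1) i).hom ∘ₗ (P.complex.d (i+2) (i+1)).hom = 0 := by
    rw [← ModuleCat.hom_comp, P.complex.d_comp_d]; rfl
  rw [ext_iff' N _ P, aux_dual_exact E hinj hfaith _ _ (by
    rw [← LinearMap.rTensor_comp, h0, LinearMap.rTensor_zero])]
  constructor
  · intro h φ hφ
    obtain ⟨χ, hχ⟩ := h (TensorProduct.curry φ) (by
      ext x m; exact LinearMap.congr_fun hφ (x ⊗ₜ m))
    refine ⟨TensorProduct.lift χ, ?_⟩
    ext x m
    exact LinearMap.congr_fun (LinearMap.congr_fun hχ x) m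
  · intro h φ hφ
    obtain ⟨χ, hχ⟩ := h (TensorProduct.lift φ) (by
      ext x m; exact LinearMap.congr_fun (LinearMap.congr_fun hφ x) m)
    refine ⟨TensorProduct.curry χ, ?_⟩
    ext x m
    exact LinearMap.congr_fun hχ (x ⊗ₜ m)

lemma exists_syz (M : ModuleCat.{u} A) (P : ProjectiveResolution M) :
    ∃ (S : ℕ → ModuleCat.{u} A) (s : ∀ i, S (i+1) →ₗ[A] P.complex.X i)
      (p : ∀ i, P.complex.X i →ₗ[A] S i) (_ : S 0 ≃ₗ[A] M),
      (∀ i, Module.Flat A (P.complex.X i)) ∧ (∀ i, Function.Injective (s i)) ∧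
      (∀ i, Function.Surjective (p i)) ∧ (∀ i, Function.Exact (s i) (p i)) ∧
      (∀ i, Function.Exact (P.complex.d (i+1) i).hom (p i)) ∧
      (∀ i, s i ∘ₗ p (i+1) = (P.complex.d (i+1) i).hom) := by
  have hex : ∀ i, Function.Exact (P.complex.d (i+2) (i+1)).hom (P.complex.d (i+1) i).hom := by
    intro i
    have := P.complex_exactAt_succ i
    rw [HomologicalComplex.exactAt_iff' _ (i+2) (i+1) i (by simp) (by simp),
      ShortComplex.ShortExact.moduleCat_exact_iff_function_exact] at this
    exact this
  have hex0 : Function.Exact (P.complex.d 1 0).hom (P.π.f 0).hom := by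
    have := P.exact₀
    rw [ShortComplex.ShortExact.moduleCat_exact_iff_function_exact] at this
    exact this
  have hsurj : Function.Surjective (P.π.f 0).hom :=
    (ModuleCat.epi_iff_surjective _).1 inferInstance
  refine ⟨fun i => ModuleCat.of A (P.complex.X i ⧸ LinearMap.range (P.complex.d (i+1) i).hom),
    fun i => (LinearMap.range (P.complex.d (i+2) (i+1)).hom).liftQ (P.complex.d (i+1) i).hom
      (hex i).linearMap_ker_eq.ge, fun i => Submodule.mkQ _,
      (Submodule.quotEquivOfEq _ _ hex0.linearMap_ker_eq.symm).trans
        ((P.π.f 0).hom.quotKerEquivOfSurjective hsurj), ?_, ?_, ?_, ?_, ?_, ?_⟩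
  · intro i
    have : Module.Projective A (P.complex.X i) :=
      (IsProjective.iff_projective _).2 (P.projective i)
    infer_instance
  · intro i
    exact LinearMap.ker_eq_bot.1 (Submodule.ker_liftQ_eq_bot' _ _ (hex i).linearMap_ker_eq.symm)
  · intro i
    exact Submodule.mkQ_surjective _
  · intro i
    rw [LinearMap.exact_iff, Submodule.ker_mkQ]
    exact (Submodule.range_liftQ _ _ _).symm
  · intro i
    rw [LinearMap.exact_iff, Submodule.ker_mkQ]
  · intro i
    exact Submodule.liftQ_mkQ _ _ _

lemma aux_equiv_inj {K P N N' : Type u} [AddCommGroup K] [AddCommGroup P] [AddCommGroup N]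
    [AddCommGroup N'] [Module A K] [Module A P] [Module A N] [Module A N'] (f : K →ₗ[A] P)
    (e : N ≃ₗ[A] N') :
    Function.Injective (f.lTensor N) ↔ Function.Injective (f.lTensor N') := by
  have c : (f.lTensor N') ∘ (e.rTensor K) = (e.rTensor P) ∘ (f.lTensor N) := by
    ext x
    change ((f.lTensor N') ∘ₗ (e.toLinearMap.rTensor K)) x =
      ((e.toLinearMap.rTensor P) ∘ₗ (f.lTensor N)) x
    rw [LinearMap.rTensor_comp_lTensor, LinearMap.lTensor_comp_rTensor]
  rw [← (e.rTensor P).injective.of_comp_iff, ← c,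
    Function.Injective.of_comp_iff' _ (e.rTensor K).bijective]

lemma tor_balance (N M : ModuleCat.{u} A) (i : ℕ) :
    Subsingleton (torGroup A N M (i+1)) ↔ Subsingleton (torGroup A M N (i+1)) := by
  let P := projectiveResolution M
  let Q := projectiveResolution N
  obtain ⟨S, s, p, e, hX, hs, hp, hsp, hdp, hd⟩ := exists_syz M P
  obtain ⟨R, r, q, e', hY, hr, hq, hrq, hdq, hd'⟩ := exists_syz N Q
  rw [tor_iff N M P, tor_iff M N Q,
    aux_exact_iff N _ _ _ (p (i+1)) (s i) (hp _) (hdp _) (hd _),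
    aux_exact_iff M _ _ _ (q (i+1)) (r i) (hq _) (hdq _) (hd' _),
    ← aux_equiv_inj _ e', ← aux_equiv_inj _ e, ← aux_comm_inj (r i)]
  exact aux_ladder _ S _ R s p r q hX hY hs hr hp hq hsp hrq i 0

lemma exact_comm {X Y W : Type u} [AddCommGroup X] [AddCommGroup Y] [AddCommGroup W]
    [Module A X] [Module A Y] [Module A W] (N : Type u) [AddCommGroup N] [Module A N]
    (f : X →ₗ[A] Y) (g : Y →ₗ[A] W) :
    Function.Exact (f.rTensor N) (g.rTensor N) ↔ Function.Exact (f.lTensor N) (g.lTensor N) := by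
  refine (Function.Exact.iff_of_ladder_linearEquiv (e₁ := TensorProduct.comm A X N)
    (e₂ := TensorProduct.comm A Y N) (e₃ := TensorProduct.comm A W N) ?_ ?_).symm <;>
  · ext; rfl

end cat

theorem injDim_hom_faithfullyInjective_eq_flatDim
    (A : Type u) [CommRing A] [IsNoetherianRing A]
    (E : Type u) [AddCommGroup E] [Module A E]
    (hinj : Module.Injective A E)
    (hfaith : ∀ (M : Type u) [AddCommGroup M] [Module A M],
      Subsingleton (M →ₗ[A] E) → Subsingleton M)
    (M : Type u) [AddCommGroup M] [Module A M] :
    injDim A (ModuleCat.of A (M →ₗ[A] E)) = flatDim A (ModuleCat.of A M) := by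
  have key : ∀ (N : ModuleCat.{u} A) (i : ℕ),
      Subsingleton (extGroup A N (ModuleCat.of A (M →ₗ[A] E)) (i+1)) ↔
        Subsingleton (torGroup A N (ModuleCat.of A M) (i+1)) := by
    intro N i
    rw [tor_balance, tor_iff _ _ (projectiveResolution N), ← exact_comm]
    exact ext_hom_iff E hinj hfaith (ModuleCat.of A M) N (projectiveResolution N) i
  unfold injDim flatDim
  congr 1
  ext n
  refine forall_congr' fun N => forall_congr' fun i => ?_
  cases i with
  | zero => simp
  | succ i => rw [key]
end

section
/- Let A be a commutative noetherian ring and let E be a faithfully injective A-module. Then for every A-module M, the flat dimension of Hom_A(M, E) over A equals the injective dimension of M over A. -/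
/-!
STATEMENT 10: Let A be a commutative noetherian ring and let E be a faithfully injective
A-module.  Then for every A-module M, the flat dimension of Hom_A(M, E) over A equals
the injective dimension of M over A.
-/

open CategoryTheory

universe u

open scoped TensorProduct
section Duality

variable {A : Type u} [CommRing A] (M E : Type u) [AddCommGroup M] [Module A M]
  [AddCommGroup E] [Module A E]

/-- The evaluation map `F ⊗ Hom(M,E) → Hom(Hom(F,M),E)`. -/
noncomputable def evalDual (F : Type u) [AddCommGroup F] [Module A F] :
    F ⊗[A] (M →ₗ[A] E) →ₗ[A] ((F →ₗ[A] M) →ₗ[A] E) :=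
  TensorProduct.lift
    ((LinearMap.llcomp A (F →ₗ[A] M) M E).flip ∘ₗ (LinearMap.id (R := A) (M := F →ₗ[A] M)).flip)

@[simp] lemma evalDual_tmul (F : Type u) [AddCommGroup F] [Module A F] (x : F) (φ : M →ₗ[A] E)
    (g : F →ₗ[A] M) : evalDual M E F (x ⊗ₜ φ) g = φ (g x) := rfl

/-- Double dual of a linear map. -/
noncomputable def ddual {F G : Type u} [AddCommGroup F] [Module A F] [AddCommGroup G] [Module A G]
    (f : F →ₗ[A] G) : ((F →ₗ[A] M) →ₗ[A] E) →ₗ[A] ((G →ₗ[A] M) →ₗ[A] E) :=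
  LinearMap.lcomp A E (LinearMap.lcomp A M f)

lemma evalDual_natural {F G : Type u} [AddCommGroup F] [Module A F] [AddCommGroup G] [Module A G]
    (f : F →ₗ[A] G) :
    ddual M E f ∘ₗ evalDual M E F = evalDual M E G ∘ₗ f.rTensor (M →ₗ[A] E) := by
  apply TensorProduct.ext'
  intro x φ
  ext g
  rfl

lemma evalDual_bijective_pi (n : ℕ) :
    Function.Bijective (evalDual (A := A) M E (ULift.{u} (Fin n) → A)) := by
  classical
  let b : ((((ULift.{u} (Fin n) → A) →ₗ[A] M) →ₗ[A] E)) → (ULift.{u} (Fin n) → A) ⊗[A] (M →ₗ[A] E) := fun ψ =>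
    ∑ i, (Pi.single i (1 : A)) ⊗ₜ (ψ ∘ₗ (LinearMap.smulRightₗ (LinearMap.proj i)))
  refine Function.bijective_iff_has_inverse.2 ⟨b, ?_, ?_⟩
  · intro t
    induction t with
    | zero => simp [b]
    | add x y hx hy =>
      have : b (evalDual M E _ (x + y)) = b (evalDual M E _ x) + b (evalDual M E _ y) := by
        simp only [b, map_add, LinearMap.add_comp, TensorProduct.tmul_add, Finset.sum_add_distrib]
      rw [this, hx, hy]
    | tmul x φ =>
      have : ∀ i, (evalDual M E _ (x ⊗ₜ φ)) ∘ₗ (LinearMap.smulRightₗ (LinearMap.proj i))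
          = x i • φ := by
        intro i; ext m; simp
      simp only [b, this, TensorProduct.tmul_smul, ← TensorProduct.smul_tmul']
      simp only [TensorProduct.smul_tmul', ← TensorProduct.sum_tmul]
      congr 1
      ext j
      simp [Finset.sum_apply, Pi.single_apply]
  · intro ψ
    ext g
    simp only [b, map_sum, LinearMap.sum_apply, evalDual_tmul, LinearMap.comp_apply]
    rw [← map_sum]
    congr 1
    ext j
    simp [LinearMap.sum_apply, Pi.single_apply]

variable {M E}

lemma lcomp_exact_of_injective (hinj : Module.Injective A E) {X Y Z : Type u}
    [AddCommGroup X] [Module A X] [AddCommGroup Y] [Module A Y] [AddCommGroup Z] [Module A Z]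
    (f : X →ₗ[A] Y) (g : Y →ₗ[A] Z) (h : Function.Exact f g) :
    Function.Exact (LinearMap.lcomp A E g) (LinearMap.lcomp A E f) := by
  intro φ
  constructor
  · intro hφ
    have hk : LinearMap.ker g ≤ LinearMap.ker φ := by
      intro y hy
      obtain ⟨x, rfl⟩ := (h y).1 hy
      exact LinearMap.congr_fun hφ x
    let e : Y ⧸ LinearMap.ker g →ₗ[A] Z := (LinearMap.ker g).liftQ g le_rfl
    have he : Function.Injective e := by
      rw [← LinearMap.ker_eq_bot]
      exact Submodule.ker_liftQ_eq_bot _ _ _ le_rfl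
    obtain ⟨ψ, hψ⟩ := hinj.out e he ((LinearMap.ker g).liftQ φ hk)
    refine ⟨ψ, ?_⟩
    ext y
    exact hψ (Submodule.Quotient.mk y)
  · rintro ⟨ψ, rfl⟩
    ext x
    change ψ (g (f x)) = 0
    rw [h.apply_apply_eq_zero, map_zero]

lemma lcomp_surjective_of_injective (hinj : Module.Injective A E) {X Y : Type u}
    [AddCommGroup X] [Module A X] [AddCommGroup Y] [Module A Y]
    (f : X →ₗ[A] Y) (h : Function.Injective f) :
    Function.Surjective (LinearMap.lcomp A E f) := by
  intro φ
  obtain ⟨ψ, hψ⟩ := hinj.out f h φ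
  exact ⟨ψ, LinearMap.ext hψ⟩

lemma lcomp_injective_iff (hinj : Module.Injective A E)
    (hfaith : ∀ (M : Type u) [AddCommGroup M] [Module A M],
      Subsingleton (M →ₗ[A] E) → Subsingleton M) {X Y : Type u}
    [AddCommGroup X] [Module A X] [AddCommGroup Y] [Module A Y]
    (f : X →ₗ[A] Y) :
    Function.Injective (LinearMap.lcomp A E f) ↔ Function.Surjective f := by
  constructor
  · intro h
    have : Subsingleton (Y ⧸ LinearMap.range f) := by
      apply hfaith
      refine ⟨fun a b => ?_⟩
      apply LinearMap.cancel_right (Submodule.mkQ_surjective (LinearMap.range f)) |>.1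
      apply h
      ext x
      have : (LinearMap.range f).mkQ (f x) = 0 := by simp
      simp [LinearMap.lcomp_apply, this]
    rw [Submodule.Quotient.subsingleton_iff] at this
    exact LinearMap.range_eq_top.1 this
  · intro h a b hab
    exact (LinearMap.cancel_right h).1 hab

variable (M) in
lemma evalDual_bijective (hinj : Module.Injective A E) (F : Type u) [AddCommGroup F] [Module A F]
    [IsNoetherianRing A] [Module.Finite A F] :
    Function.Bijective (evalDual (A := A) M E F) := by
  obtain ⟨n, p, hp⟩ : ∃ (n : ℕ) (p : (ULift.{u} (Fin n) → A) →ₗ[A] F), Function.Surjective p := by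
    obtain ⟨n, p, hp⟩ := Module.Finite.exists_fin' A F
    exact ⟨n, p ∘ₗ (LinearEquiv.funCongrLeft A A Equiv.ulift.symm).toLinearMap,
      hp.comp (LinearEquiv.surjective _)⟩
  obtain ⟨m, q, hq⟩ : ∃ (n : ℕ) (p : (ULift.{u} (Fin n) → A) →ₗ[A] LinearMap.ker p),
      Function.Surjective p := by
    obtain ⟨n, p, hp⟩ := Module.Finite.exists_fin' A (LinearMap.ker p)
    exact ⟨n, p ∘ₗ (LinearEquiv.funCongrLeft A A Equiv.ulift.symm).toLinearMap,
      hp.comp (LinearEquiv.surjective _)⟩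
  let r := (LinearMap.ker p).subtype ∘ₗ q
  have hrp : Function.Exact r p := by
    rw [LinearMap.exact_iff, LinearMap.range_comp, LinearMap.range_eq_top.2 hq]
    simp
  have hinjp : Function.Injective (LinearMap.lcomp A M p) := fun a b hab =>
    (LinearMap.cancel_right hp).1 hab
  have hex : Function.Exact (LinearMap.lcomp A M p) (LinearMap.lcomp A M r) :=
    LinearMap.exact_lcomp_of_exact_of_surjective M hrp hp
  have hdd : Function.Exact (ddual M E r) (ddual M E p) := lcomp_exact_of_injective hinj _ _ hex
  have hdds : Function.Surjective (ddual M E p) := lcomp_surjective_of_injective hinj _ hinjp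
  have h1 := evalDual_bijective_pi (A := A) M E m
  have h2 := evalDual_bijective_pi (A := A) M E n
  have n1 := evalDual_natural M E r
  have n2 := evalDual_natural M E p
  have hT := rTensor_exact (M →ₗ[A] E) hrp hp
  have hTs := LinearMap.rTensor_surjective (M →ₗ[A] E) hp
  constructor
  · rw [injective_iff_map_eq_zero]
    intro t ht
    obtain ⟨s, rfl⟩ := hTs t
    rw [← LinearMap.comp_apply, ← n2] at ht
    obtain ⟨v, hv⟩ := (hdd _).1 ht
    obtain ⟨w, rfl⟩ := h1.2 v
    rw [← LinearMap.comp_apply, n1] at hv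
    have := h2.1 hv
    rw [← this]
    exact hT.apply_apply_eq_zero w
  · intro ψ
    obtain ⟨v, rfl⟩ := hdds ψ
    obtain ⟨w, rfl⟩ := h2.2 v
    exact ⟨_, (LinearMap.congr_fun n2 w).symm⟩

/-- Base case of the duality. -/
lemma rTensor_hom_injective_iff [IsNoetherianRing A] (hinj : Module.Injective A E)
    (hfaith : ∀ (M : Type u) [AddCommGroup M] [Module A M],
      Subsingleton (M →ₗ[A] E) → Subsingleton M)
    {K P : Type u} [AddCommGroup K] [Module A K] [Module.Finite A K]
    [AddCommGroup P] [Module A P] [Module.Finite A P] (f : K →ₗ[A] P) :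
    Function.Injective (f.rTensor (M →ₗ[A] E)) ↔ Function.Surjective (LinearMap.lcomp A M f) := by
  rw [← lcomp_injective_iff hinj hfaith (LinearMap.lcomp A M f)]
  change _ ↔ Function.Injective (ddual M E f)
  have h1 := evalDual_bijective M hinj K
  have h2 := evalDual_bijective M hinj P
  have n : (ddual M E f) ∘ (evalDual M E K) = evalDual M E P ∘ f.rTensor (M →ₗ[A] E) :=
    congrArg DFunLike.coe (evalDual_natural M E f)
  rw [← h2.1.of_comp_iff (f.rTensor (M →ₗ[A] E)), ← n, Function.Injective.of_comp_iff' _ h1]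

end Duality
section ExtPart

open Limits

variable {A : Type u} [CommRing A]

lemma subsingleton_extGroup_iff (N M : ModuleCat.{u} A) (i : ℕ) :
    Subsingleton (extGroup A N M (i + 1)) ↔ Subsingleton (Abelian.Ext.{u} N M (i + 1)) := by
  let P := projectiveResolution N
  have key : Subsingleton (extGroup A N M (i + 1)) ↔
      ∀ f : P.complex.X (i + 1) ⟶ M, P.complex.d (i + 2) (i + 1) ≫ f = 0 →
        ∃ g : P.complex.X i ⟶ M, P.complex.d (i + 1) i ≫ g = f := by
    rw [← ModuleCat.isZero_iff_subsingleton, (P.isoExt (R := A) (i + 1) M).isZero_iff,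
      ← HomologicalComplex.exactAt_iff_isZero_homology,
      HomologicalComplex.exactAt_iff' _ i (i + 1) (i + 2) (by simp) (by simp),
      ShortComplex.moduleCat_exact_iff]
    rfl
  rw [key]
  constructor
  · intro h
    refine subsingleton_of_forall_eq 0 fun α => ?_
    obtain ⟨f, hf, rfl⟩ := P.extMk_surjective α (i + 2) rfl
    exact (P.extMk_eq_zero_iff f (i + 2) rfl hf i rfl).2 (h f hf)
  · intro h f hf
    exact (P.extMk_eq_zero_iff f (i + 2) rfl hf i rfl).1 (Subsingleton.elim _ _)

lemma ext_shift_s10 {S : ShortComplex (ModuleCat.{u} A)} (hS : S.ShortExact) [Projective S.X₂]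
    (M : ModuleCat.{u} A) (i : ℕ) :
    Subsingleton (Abelian.Ext.{u} S.X₃ M (i + 2)) ↔
      Subsingleton (Abelian.Ext.{u} S.X₁ M (i + 1)) := by
  constructor
  · intro h
    refine subsingleton_of_forall_eq 0 fun x => ?_
    obtain ⟨y, rfl⟩ := Abelian.Ext.contravariant_sequence_exact₁ hS M x (n₁ := i + 2) (by omega)
      (Subsingleton.elim _ _)
    rw [Abelian.Ext.eq_zero_of_projective y, Abelian.Ext.comp_zero]
  · intro h
    refine subsingleton_of_forall_eq 0 fun x => ?_
    obtain ⟨y, rfl⟩ := Abelian.Ext.contravariant_sequence_exact₃ hS M x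
      (Abelian.Ext.eq_zero_of_projective _) (n₀ := i + 1) (by omega)
    rw [Subsingleton.elim y 0, Abelian.Ext.comp_zero]

lemma ext_one_iff {S : ShortComplex (ModuleCat.{u} A)} (hS : S.ShortExact) [Projective S.X₂]
    (M : ModuleCat.{u} A) :
    Subsingleton (Abelian.Ext.{u} S.X₃ M 1) ↔
      Function.Surjective (LinearMap.lcomp A M S.f.hom) := by
  constructor
  · intro h φ
    obtain ⟨y, hy⟩ := Abelian.Ext.contravariant_sequence_exact₁ hS M
      (Abelian.Ext.mk₀ (ModuleCat.ofHom φ)) (n₁ := 1) (by omega) (Subsingleton.elim _ _)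
    obtain ⟨g, rfl⟩ := (Abelian.Ext.mk₀_bijective _ _).2 y
    rw [Abelian.Ext.mk₀_comp_mk₀] at hy
    have := (Abelian.Ext.mk₀_bijective _ _).1 hy
    exact ⟨g.hom, congrArg ModuleCat.Hom.hom this⟩
  · intro h
    refine subsingleton_of_forall_eq 0 fun x => ?_
    obtain ⟨y, rfl⟩ := Abelian.Ext.contravariant_sequence_exact₃ hS M x
      (Abelian.Ext.eq_zero_of_projective _) (n₀ := 0) (by omega)
    obtain ⟨g, rfl⟩ := (Abelian.Ext.mk₀_bijective _ _).2 y
    obtain ⟨ψ, hψ⟩ := h g.hom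
    have : g = S.f ≫ ModuleCat.ofHom ψ := by
      ext1
      exact hψ.symm
    rw [this, ← Abelian.Ext.mk₀_comp_mk₀, ← Abelian.Ext.comp_assoc_of_second_deg_zero]
    simp

lemma ext_of_finite (k : ℕ) : ∀ (M : ModuleCat.{u} A)
    (_ : ∀ N : ModuleCat.{u} A, Module.Finite A N → Subsingleton (Abelian.Ext.{u} N M (k + 1)))
    (N : ModuleCat.{u} A), Subsingleton (Abelian.Ext.{u} N M (k + 1)) := by
  induction k with
  | zero =>
    intro M h N
    have hb : Module.Baer A M := by
      intro I g
      let S : ShortComplex (ModuleCat.{u} A) :=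
        ModuleCat.shortComplexOfCompEqZero I.subtype (Submodule.mkQ I)
          (by ext x; exact (Submodule.Quotient.mk_eq_zero I).2 x.2)
      have hS : S.ShortExact := ModuleCat.shortComplex_shortExact S
        (LinearMap.exact_subtype_mkQ I) I.injective_subtype (Submodule.mkQ_surjective _)
      have : Projective S.X₂ := inferInstanceAs (Projective (ModuleCat.of A A))
      obtain ⟨ψ, hψ⟩ := (ext_one_iff hS M).1
        (h _ (inferInstanceAs (Module.Finite A (A ⧸ I)))) g
      exact ⟨ψ, fun x hx => LinearMap.congr_fun hψ ⟨x, hx⟩⟩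
    have : Module.Injective A M := hb.injective
    have : Injective M := Module.injective_object_of_injective_module A M
    refine subsingleton_of_forall_eq 0 fun x => Abelian.Ext.eq_zero_of_injective x
  | succ k ih =>
    intro M h N
    let ⟨I, _, f, _⟩ := EnoughInjectives.presentation M
    have injf : Function.Injective f.hom := (ModuleCat.mono_iff_injective f).mp ‹_›
    let S : ShortComplex (ModuleCat.{u} A) :=
      ModuleCat.shortComplexOfCompEqZero _ _ f.hom.exact_map_mkQ_range.linearMap_comp_eq_zero
    have hS : S.ShortExact := ModuleCat.shortComplex_shortExact S
      f.hom.exact_map_mkQ_range injf (Submodule.mkQ_surjective _)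
    have hI : Injective S.X₂ := ‹_›
    have h' := ih S.X₃ (fun N hN => by
      have := h N hN
      refine subsingleton_of_forall_eq 0 fun x => ?_
      obtain ⟨y, rfl⟩ := Abelian.Ext.covariant_sequence_exact₃ N hS x (n₁ := k + 2) rfl
        ((h N hN).elim _ _)
      rw [Abelian.Ext.eq_zero_of_injective y, Abelian.Ext.zero_comp]) N
    refine subsingleton_of_forall_eq 0 fun x => ?_
    obtain ⟨y, hy⟩ := Abelian.Ext.covariant_sequence_exact₁ N hS x
      (Abelian.Ext.eq_zero_of_injective _) (n₀ := k + 1) rfl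
    rw [← hy, Subsingleton.elim y 0, Abelian.Ext.zero_comp]

end ExtPart
section TorPart

open Limits MonoidalCategory
open scoped TensorProduct

variable {A : Type u} [CommRing A]

/-- The complex `N ⊗ Q`. -/
noncomputable abbrev tensorCx (N : ModuleCat.{u} A) (Q : ChainComplex (ModuleCat.{u} A) ℕ) :
    ChainComplex (ModuleCat.{u} A) ℕ :=
  (((tensoringLeft (ModuleCat.{u} A)).obj N).mapHomologicalComplex _).obj Q

/-- The map of complexes `N ⊗ Q → N' ⊗ Q`. -/
noncomputable abbrev tensorCxMap {N N' : ModuleCat.{u} A} (f : N ⟶ N')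
    (Q : ChainComplex (ModuleCat.{u} A) ℕ) : tensorCx N Q ⟶ tensorCx N' Q :=
  (NatTrans.mapHomologicalComplex ((tensoringLeft (ModuleCat.{u} A)).map f) _).app Q

lemma tensorCxMap_f {N N' : ModuleCat.{u} A} (f : N ⟶ N')
    (Q : ChainComplex (ModuleCat.{u} A) ℕ) (i : ℕ) : (tensorCxMap f Q).f i = f ▷ Q.X i := rfl

lemma torGroup_iff (N X : ModuleCat.{u} A) (P : ProjectiveResolution X) (i : ℕ) :
    Subsingleton (torGroup A N X i) ↔ IsZero ((tensorCx N P.complex).homology i) := by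
  rw [← ModuleCat.isZero_iff_subsingleton]
  exact (P.isoLeftDerivedObj ((tensoringLeft (ModuleCat.{u} A)).obj N) i).isZero_iff

lemma torGroup_iff_exact (N X : ModuleCat.{u} A) (P : ProjectiveResolution X) (i : ℕ) :
    Subsingleton (torGroup A N X (i + 1)) ↔
      ∀ t : N ⊗[A] P.complex.X (i + 1), (P.complex.d (i + 1) i).hom.lTensor N t = 0 →
        ∃ s : N ⊗[A] P.complex.X (i + 2), (P.complex.d (i + 2) (i + 1)).hom.lTensor N s = t := by
  rw [torGroup_iff N X P, ← HomologicalComplex.exactAt_iff_isZero_homology,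
      HomologicalComplex.exactAt_iff' _ (i + 2) (i + 1) i (by simp) (by simp),
      ShortComplex.moduleCat_exact_iff]
  rfl

lemma tor_flat_isZero (N X : ModuleCat.{u} A) [Module.Flat A N] (P : ProjectiveResolution X)
    (i : ℕ) : IsZero ((tensorCx N P.complex).homology (i + 1)) := by
  rw [← torGroup_iff N X P, torGroup_iff_exact N X P]
  have h := P.complex_exactAt_succ i
  rw [HomologicalComplex.exactAt_iff' _ (i + 2) (i + 1) i (by simp) (by simp),
    ShortComplex.ShortExact.moduleCat_exact_iff_function_exact] at h
  intro t ht
  exact (Module.Flat.lTensor_exact N h t).1 ht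

/-- The short complex of complexes obtained by tensoring. -/
noncomputable abbrev tensorSC (S : ShortComplex (ModuleCat.{u} A))
    (Q : ChainComplex (ModuleCat.{u} A) ℕ) : ShortComplex (ChainComplex (ModuleCat.{u} A) ℕ) :=
  ShortComplex.mk (tensorCxMap S.f Q) (tensorCxMap S.g Q) (by
    ext i : 1
    change S.f ▷ Q.X i ≫ S.g ▷ Q.X i = 0
    rw [← comp_whiskerRight, S.zero, MonoidalPreadditive.zero_whiskerRight])

lemma flat_resolution {X : ModuleCat.{u} A} (P : ProjectiveResolution X) (i : ℕ) :
    Module.Flat A (P.complex.X i) := by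
  have : Module.Projective A (P.complex.X i) :=
    (IsProjective.iff_projective (P.complex.X i)).2 (P.projective i)
  infer_instance

lemma tensorSC_shortExact {S : ShortComplex (ModuleCat.{u} A)} (hS : S.ShortExact)
    {X : ModuleCat.{u} A} (P : ProjectiveResolution X) :
    (tensorSC S P.complex).ShortExact := by
  apply HomologicalComplex.shortExact_of_degreewise_shortExact
  intro i
  have := flat_resolution P i
  have hm := hS.mono_f
  have he := hS.epi_g
  exact hS.map (tensorRight (P.complex.X i))

lemma tor_shift {S : ShortComplex (ModuleCat.{u} A)} (hS : S.ShortExact) [Module.Flat A S.X₂]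
    (X : ModuleCat.{u} A) (i : ℕ) :
    Subsingleton (torGroup A S.X₃ X (i + 2)) ↔ Subsingleton (torGroup A S.X₁ X (i + 1)) := by
  let P := projectiveResolution X
  rw [torGroup_iff _ _ P, torGroup_iff _ _ P]
  exact ((tensorSC_shortExact hS P).δIso (i + 2) (i + 1) (by simp)
    (tor_flat_isZero S.X₂ X P _) (tor_flat_isZero S.X₂ X P _)).isZero_iff

lemma tor_one_iff {S : ShortComplex (ModuleCat.{u} A)} (hS : S.ShortExact) [Module.Flat A S.X₂]
    (X : ModuleCat.{u} A) :
    Subsingleton (torGroup A S.X₃ X 1) ↔ Function.Injective (S.f.hom.rTensor X) := by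
  let P := projectiveResolution X
  have hT := tensorSC_shortExact hS P
  let e (N : ModuleCat.{u} A) : (tensorCx N P.complex).homology 0 ≅ N ⊗ X :=
    ChainComplex.isoHomologyι₀ _ ≪≫
      asIso (P.fromLeftDerivedZero' ((tensoringLeft (ModuleCat.{u} A)).obj N))
  have comm : HomologicalComplex.homologyMap (tensorCxMap S.f P.complex) 0 ≫ (e S.X₂).hom =
      (e S.X₁).hom ≫ S.f ▷ X := by
    have h2 : HomologicalComplex.opcyclesMap (tensorCxMap S.f P.complex) 0 ≫
        P.fromLeftDerivedZero' ((tensoringLeft (ModuleCat.{u} A)).obj S.X₂) =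
        P.fromLeftDerivedZero' ((tensoringLeft (ModuleCat.{u} A)).obj S.X₁) ≫ S.f ▷ X := by
      rw [← cancel_epi (HomologicalComplex.pOpcycles _ _),
        HomologicalComplex.p_opcyclesMap_assoc,
        ProjectiveResolution.pOpcycles_comp_fromLeftDerivedZero',
        ProjectiveResolution.pOpcycles_comp_fromLeftDerivedZero'_assoc]
      exact (((tensoringLeft (ModuleCat.{u} A)).map S.f).naturality (P.π.f 0)).symm
    change _ ≫ HomologicalComplex.homologyι _ 0 ≫ _ =
      (HomologicalComplex.homologyι _ 0 ≫ _) ≫ _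
    rw [HomologicalComplex.homologyι_naturality_assoc, Category.assoc]
    congr 1
  have h1 : Subsingleton (torGroup A S.X₃ X 1) ↔
      Mono (HomologicalComplex.homologyMap (tensorCxMap S.f P.complex) 0) := by
    rw [torGroup_iff _ _ P]
    constructor
    · intro h
      have := (hT.homology_exact₁ 1 0 (by simp)).mono_g (h.eq_of_src _ _)
      exact this
    · intro h
      have hm := hT.mono_δ 1 0 (by simp) (tor_flat_isZero S.X₂ X P _)
      have hz : hT.δ 1 0 (by simp) = 0 := by
        have h' : Mono (HomologicalComplex.homologyMap (tensorSC S P.complex).f 0) := h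
        rw [← cancel_mono (HomologicalComplex.homologyMap (tensorSC S P.complex).f 0)]
        rw [hT.δ_comp, zero_comp]
      exact IsZero.of_mono_eq_zero _ hz
  rw [h1, ← ModuleCat.hom_whiskerRight, ← ModuleCat.mono_iff_injective]
  constructor
  · intro h
    have : S.f ▷ X = (e S.X₁).inv ≫ HomologicalComplex.homologyMap (tensorCxMap S.f P.complex) 0
      ≫ (e S.X₂).hom := by rw [comm]; simp
    rw [this]
    infer_instance
  · intro h
    have : HomologicalComplex.homologyMap (tensorCxMap S.f P.complex) 0 =
      (e S.X₁).hom ≫ S.f ▷ X ≫ (e S.X₂).inv := by rw [← Category.assoc, ← comm]; simp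
    rw [this]
    infer_instance

lemma tor_of_finite (k : ℕ) (X : ModuleCat.{u} A)
    (h : ∀ N : ModuleCat.{u} A, Module.Finite A N → Subsingleton (torGroup A N X (k + 1)))
    (N : ModuleCat.{u} A) : Subsingleton (torGroup A N X (k + 1)) := by
  let P := projectiveResolution X
  rw [torGroup_iff_exact N X P]
  intro t ht
  obtain ⟨N', hN', hs⟩ := TensorProduct.exists_finite_submodule_left_of_setFinite {t}
    (Set.finite_singleton t)
  obtain ⟨t', rfl⟩ := hs rfl
  have := flat_resolution P k
  have hinj : Function.Injective (N'.subtype.rTensor (P.complex.X k)) :=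
    Module.Flat.rTensor_preserves_injective_linearMap _ N'.injective_subtype
  obtain ⟨s, hs⟩ := (torGroup_iff_exact (ModuleCat.of A N') X P k).1
    (h (ModuleCat.of A N') hN') t' (by
      apply hinj
      rw [map_zero, ← ht]
      rw [← LinearMap.comp_apply, ← LinearMap.comp_apply, LinearMap.rTensor_comp_lTensor,
        LinearMap.lTensor_comp_rTensor])
  refine ⟨N'.subtype.rTensor _ s, ?_⟩
  rw [← hs, ← LinearMap.comp_apply, ← LinearMap.comp_apply, LinearMap.rTensor_comp_lTensor,
    LinearMap.lTensor_comp_rTensor]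

end TorPart
section Main

variable {A : Type u} [CommRing A] [IsNoetherianRing A]

/-- A presentation of a finite module by a finite free module. -/
lemma exists_finite_presentation (N : ModuleCat.{u} A) [Module.Finite A N] :
    ∃ S : ShortComplex (ModuleCat.{u} A), S.ShortExact ∧ S.X₃ = N ∧ Module.Finite A S.X₁ ∧
      Module.Finite A S.X₂ ∧ Module.Projective A S.X₂ := by
  obtain ⟨n, p, hp⟩ := Module.Finite.exists_fin' A N
  let S : ShortComplex (ModuleCat.{u} A) :=
    ModuleCat.shortComplexOfCompEqZero (LinearMap.ker p).subtype p (by ext x; simp)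
  refine ⟨S, ModuleCat.shortComplex_shortExact S (LinearMap.exact_subtype_ker_map p)
    (Submodule.injective_subtype _) hp, rfl, ?_, ?_, ?_⟩
  · exact inferInstanceAs (Module.Finite A (LinearMap.ker p))
  · exact inferInstanceAs (Module.Finite A (Fin n → A))
  · exact inferInstanceAs (Module.Projective A (Fin n → A))

lemma tor_hom_iff_ext (E : Type u) [AddCommGroup E] [Module A E]
    (hinj : Module.Injective A E)
    (hfaith : ∀ (M : Type u) [AddCommGroup M] [Module A M],
      Subsingleton (M →ₗ[A] E) → Subsingleton M)
    (M : Type u) [AddCommGroup M] [Module A M] (k : ℕ) :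
    ∀ (N : ModuleCat.{u} A) [Module.Finite A N],
    Subsingleton (torGroup A N (ModuleCat.of A (M →ₗ[A] E)) (k + 1)) ↔
      Subsingleton (Abelian.Ext.{u} N (ModuleCat.of A M) (k + 1)) := by
  induction k with
  | zero =>
    intro N _
    obtain ⟨S, hS, rfl, h1, h2, h3⟩ := exists_finite_presentation N
    have : Projective S.X₂ := (IsProjective.iff_projective _).1 h3
    rw [zero_add, tor_one_iff hS, ext_one_iff hS]
    exact rTensor_hom_injective_iff hinj hfaith S.f.hom
  | succ k ih =>
    intro N _
    obtain ⟨S, hS, rfl, h1, h2, h3⟩ := exists_finite_presentation N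
    have : Projective S.X₂ := (IsProjective.iff_projective _).1 h3
    rw [tor_shift hS, ext_shift_s10 hS]
    exact ih S.X₁

end Main

theorem flatDim_hom_faithfullyInjective_eq_injDim
    (A : Type u) [CommRing A] [IsNoetherianRing A]
    (E : Type u) [AddCommGroup E] [Module A E]
    (hinj : Module.Injective A E)
    (hfaith : ∀ (M : Type u) [AddCommGroup M] [Module A M],
      Subsingleton (M →ₗ[A] E) → Subsingleton M)
    (M : Type u) [AddCommGroup M] [Module A M] :
    flatDim A (ModuleCat.of A (M →ₗ[A] E)) = injDim A (ModuleCat.of A M) := by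
  have key : ∀ k : ℕ,
      (∀ N : ModuleCat.{u} A,
        Subsingleton (torGroup A N (ModuleCat.of A (M →ₗ[A] E)) (k + 1))) ↔
      (∀ N : ModuleCat.{u} A, Subsingleton (extGroup A N (ModuleCat.of A M) (k + 1))) := by
    intro k
    simp only [subsingleton_extGroup_iff]
    constructor
    · intro h
      exact ext_of_finite k _ fun N _ => (tor_hom_iff_ext E hinj hfaith M k N).1 (h N)
    · intro h
      exact tor_of_finite k _ fun N _ => (tor_hom_iff_ext E hinj hfaith M k N).2 (h N)
  unfold flatDim injDim
  congr 1
  ext n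
  constructor
  · intro h N i hi
    cases i with
    | zero => simp at hi
    | succ k => exact (key k).1 (fun N => h N (k + 1) hi) N
  · intro h N i hi
    cases i with
    | zero => simp at hi
    | succ k => exact (key k).2 (fun N => h N (k + 1) hi) N
end

section
/- Let A be a commutative noetherian ring. Then the big finitistic flat dimension of A equals the big finitistic injective dimension of A; that is, sup{ flatdim_A(M) : M an A-module with flatdim_A(M) < ∞ } = sup{ injdim_A(M) : M an A-module with injdim_A(M) < ∞ }. -/
/-!
STATEMENT 11: Let A be a commutative noetherian ring.  Then the big finitistic flat
dimension of A equals the big finitistic injective dimension of A: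
sup{ flatdim_A(M) : flatdim_A(M) < ∞ } = sup{ injdim_A(M) : injdim_A(M) < ∞ }.
-/

open CategoryTheory

universe u

open CategoryTheory.Limits TensorProduct

section CharLemmas

variable {A : Type u} [CommRing A]

lemma dual_exact_of_surjective {X Y Z : Type*} [AddCommGroup X] [AddCommGroup Y] [AddCommGroup Z]
    [Module A X] [Module A Y] [Module A Z] (f : X →ₗ[A] Y) (g : Y →ₗ[A] Z)
    (h : Function.Exact f g) (hg : Function.Surjective g) :
    Function.Exact (CharacterModule.dual g) (CharacterModule.dual f) := by
  intro c
  constructor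
  · intro hc
    have hc' : ∀ x, c (f x) = 0 := fun x => DFunLike.congr_fun hc x
    let c0 : Y →+ AddCircle (1 : ℚ) := c
    have hker : g.toAddMonoidHom.ker ≤ c0.ker := by
      intro y hy
      obtain ⟨x, rfl⟩ := (h y).1 hy
      exact hc' x
    refine ⟨g.toAddMonoidHom.liftOfSurjective hg ⟨c0, hker⟩, ?_⟩
    refine CharacterModule.ext (A := Y) fun y => ?_
    exact AddMonoidHom.liftOfRightInverse_comp_apply g.toAddMonoidHom _ (Function.rightInverse_surjInv hg) ⟨c0, hker⟩ y
  · rintro ⟨d, rfl⟩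
    refine CharacterModule.ext (A := X) fun x => ?_
    change d (g (f x)) = 0
    rw [h.apply_apply_eq_zero]
    exact map_zero d

lemma dual_exact {X Y Z : Type*} [AddCommGroup X] [AddCommGroup Y] [AddCommGroup Z]
    [Module A X] [Module A Y] [Module A Z] (f : X →ₗ[A] Y) (g : Y →ₗ[A] Z)
    (h : Function.Exact f g) :
    Function.Exact (CharacterModule.dual g) (CharacterModule.dual f) := by
  have h1 := dual_exact_of_surjective f g.rangeRestrict
    (by intro y; rw [← h y, Subtype.ext_iff]; rfl) g.surjective_rangeRestrict
  have h2 := CharacterModule.dual_surjective_of_injective (LinearMap.range g).subtype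
    Subtype.val_injective
  intro c
  rw [h1 c]
  constructor
  · rintro ⟨a, rfl⟩
    obtain ⟨b, rfl⟩ := h2 a
    exact ⟨b, rfl⟩
  · rintro ⟨b, rfl⟩
    exact ⟨CharacterModule.dual (LinearMap.range g).subtype b, rfl⟩

/-- The short complex of character modules. -/
lemma dual_shortExact {X Y Z : Type u} [AddCommGroup X] [AddCommGroup Y] [AddCommGroup Z]
    [Module A X] [Module A Y] [Module A Z] (f : X →ₗ[A] Y) (g : Y →ₗ[A] Z)
    (hf : Function.Injective f) (h : Function.Exact f g) (hg : Function.Surjective g) :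
    ∃ w, (ShortComplex.mk (ModuleCat.ofHom (CharacterModule.dual g))
      (ModuleCat.ofHom (CharacterModule.dual f)) w).ShortExact := by
  have he := dual_exact_of_surjective f g h hg
  refine ⟨?_, ModuleCat.shortComplex_shortExact _ ?_ ?_ ?_⟩
  · ext1
    exact he.linearMap_comp_eq_zero
  · exact he
  · exact CharacterModule.dual_injective_of_surjective _ hg
  · exact CharacterModule.dual_surjective_of_injective _ hf

lemma flat_iff_dimLT {M : Type u} [AddCommGroup M] [Module A M] :
    Module.Flat A M ↔ HasInjectiveDimensionLT (ModuleCat.of A (CharacterModule M)) 1 := by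
  rw [Module.Flat.iff_characterModule_injective, Module.injective_iff_injective_object,
    injective_iff_hasInjectiveDimensionLT_one]

lemma flat_of_lTensor_inj {X Y Z : Type u} [AddCommGroup X] [AddCommGroup Y] [AddCommGroup Z]
    [Module A X] [Module A Y] [Module A Z] (f : X →ₗ[A] Y) (g : Y →ₗ[A] Z)
    (h : Function.Exact f g) (hg : Function.Surjective g) [Module.Flat A Y]
    (H : ∀ (N : Type u) [AddCommGroup N] [Module A N], Function.Injective (f.lTensor N)) :
    Module.Flat A Z := by
  have h1 : Function.Injective (f.rTensor (CharacterModule X)) := by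
    rw [← LinearMap.lTensor_inj_iff_rTensor_inj]
    exact H _
  rw [rTensor_injective_iff_lcomp_surjective] at h1
  let ev : X →ₗ[A] CharacterModule (CharacterModule X) :=
    CharacterModule.curry ((CharacterModule.homEquiv (LinearMap.id :
      CharacterModule X →ₗ[A] CharacterModule X)).comp
        (TensorProduct.comm A X (CharacterModule X)).toLinearMap.toAddMonoidHom)
  have hev : ∀ x c, ev x c = c x := fun x c => rfl
  obtain ⟨e, he⟩ := h1 ev
  let s : CharacterModule X →ₗ[A] CharacterModule Y :=
    CharacterModule.curry ((CharacterModule.homEquiv e).comp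
        (TensorProduct.comm A (CharacterModule X) Y).toLinearMap.toAddMonoidHom)
  have hs : ∀ c y, s c y = e y c := fun _ _ => rfl
  have hsec : CharacterModule.dual f ∘ₗ s = LinearMap.id := by
    ext c x
    change s c (f x) = c x
    rw [hs, ← hev, ← he]
    rfl
  have hex := dual_exact_of_surjective f g h hg
  have hinj := CharacterModule.dual_injective_of_surjective g hg
  have := (List.TFAE.out (hex.split_tfae') 0 1 rfl rfl).1 ⟨hinj, s, hsec⟩
  obtain ⟨-, l, hl⟩ := this
  have hY := (flat_iff_dimLT (A := A) (M := Y)).1 inferInstance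
  rw [flat_iff_dimLT]
  refine Retract.hasInjectiveDimensionLT
    (Y := ModuleCat.of A (CharacterModule Y)) ⟨ModuleCat.ofHom (CharacterModule.dual g), ModuleCat.ofHom l, ?_⟩ 1
  ext1
  exact hl

lemma flat_ker {X Y Z : Type u} [AddCommGroup X] [AddCommGroup Y] [AddCommGroup Z]
    [Module A X] [Module A Y] [Module A Z] (f : X →ₗ[A] Y) (g : Y →ₗ[A] Z)
    (hf : Function.Injective f)
    (h : Function.Exact f g) (hg : Function.Surjective g) [Module.Flat A Y] [Module.Flat A Z] :
    Module.Flat A X := by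
  obtain ⟨w, hS⟩ := dual_shortExact f g hf h hg
  rw [flat_iff_dimLT]
  have hY := (flat_iff_dimLT (A := A) (M := Y)).1 inferInstance
  have hZ := (flat_iff_dimLT (A := A) (M := Z)).1 inferInstance
  exact hS.hasInjectiveDimensionLT_X₃ 1 hY (hasInjectiveDimensionLT_of_ge _ 1 2 (by simp))

end CharLemmas

section Res

variable {A : Type u} [CommRing A]

/-- A flat resolution of `M`. -/
structure FRes (A : Type u) [CommRing A] (P : ℕ → ModuleCat.{u} A)
    (d : ∀ i, P (i+1) →ₗ[A] P i) (M : Type u) [AddCommGroup M] [Module A M]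
    (ε : P 0 →ₗ[A] M) : Prop where
  surj : Function.Surjective ε
  ex0 : Function.Exact (d 0) ε
  ex : ∀ i, Function.Exact (d (i+1)) (d i)
  flat : ∀ i, Module.Flat A (P i)

variable {P : ℕ → ModuleCat.{u} A}
    {d : ∀ i, P (i+1) →ₗ[A] P i} {M : Type u} [AddCommGroup M] [Module A M]
    {ε : P 0 →ₗ[A] M}

lemma FRes.mem (h : FRes A P d M ε) (x : P 1) : d 0 x ∈ LinearMap.ker ε :=
  h.ex0.apply_apply_eq_zero x

lemma FRes.shift (h : FRes A P d M ε) :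
    FRes A (fun i => P (i+1)) (fun i => d (i+1)) (LinearMap.ker ε)
      ((d 0).codRestrict _ h.mem) where
  surj := by
    rintro ⟨y, hy⟩
    obtain ⟨x, rfl⟩ := (h.ex0 y).1 hy
    exact ⟨x, rfl⟩
  ex0 := by
    intro x
    rw [← h.ex 0 x, Subtype.ext_iff]
    rfl
  ex i := h.ex (i+1)
  flat i := h.flat (i+1)

/-- Exactness of all tensors at position `i+1`. -/
def TEx (P : ℕ → ModuleCat.{u} A) (d : ∀ i, P (i+1) →ₗ[A] P i) (i : ℕ) : Prop :=
  ∀ (N : ModuleCat.{u} A), Function.Exact ((d (i+1)).lTensor N) ((d i).lTensor N)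

lemma FRes.tex_zero_iff (h : FRes A P d M ε) :
    TEx P d 0 ↔ Module.Flat A M := by
  have := h.flat 0
  have hs := h.shift
  have hex : Function.Exact (LinearMap.ker ε).subtype ε := by
    intro x; simp
  have key : ∀ (N : ModuleCat.{u} A), Function.Exact ((d 1).lTensor N) ((d 0).lTensor N) ↔
      Function.Injective ((LinearMap.ker ε).subtype.lTensor N) := by
    intro N
    have h1 := lTensor_exact N hs.ex0 hs.surj
    have h2 := LinearMap.lTensor_surjective N hs.surj
    have h3 : (d 0).lTensor N = (LinearMap.ker ε).subtype.lTensor N ∘ₗ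
        ((d 0).codRestrict _ h.mem).lTensor N := by
      rw [← LinearMap.lTensor_comp]; rfl
    rw [h3]
    constructor
    · intro h4
      rw [injective_iff_map_eq_zero]
      intro y hy
      obtain ⟨x, rfl⟩ := h2 y
      exact (h1 x).2 ((h4 x).1 hy)
    · intro h4 x
      rw [← h1 x]
      exact map_eq_zero_iff _ h4
  constructor
  · intro H
    exact flat_of_lTensor_inj _ ε hex h.surj (fun N _ _ => (key (ModuleCat.of A N)).1 (H _))
  · intro _ N
    rw [key]
    exact LinearMap.lTensor_injective_of_exact_of_flat _ h.surj _ Subtype.val_injective hex N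

lemma FRes.flat_ker (h : FRes A P d M ε) [Module.Flat A M] : Module.Flat A (LinearMap.ker ε) := by
  have := h.flat 0
  refine _root_.flat_ker (LinearMap.ker ε).subtype ε Subtype.val_injective ?_ h.surj
  intro x; simp

lemma FRes.tex_of_flat (i : ℕ) : ∀ {P : ℕ → ModuleCat.{u} A}
    {d : ∀ i, P (i+1) →ₗ[A] P i} {M : Type u} [AddCommGroup M] [Module A M]
    {ε : P 0 →ₗ[A] M} (_ : FRes A P d M ε) [Module.Flat A M], TEx P d i := by
  induction i with
  | zero => intro P d M _ _ ε h hM; exact h.tex_zero_iff.2 hM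
  | succ i ih =>
    intro P d M _ _ ε h hM
    have := h.flat_ker
    exact ih (P := fun i => P (i+1)) (d := fun i => d (i+1)) h.shift

lemma FRes.tex_iff (n : ℕ) : ∀ {P : ℕ → ModuleCat.{u} A}
    {d : ∀ i, P (i+1) →ₗ[A] P i} {M : Type u} [AddCommGroup M] [Module A M]
    {ε : P 0 →ₗ[A] M} (_ : FRes A P d M ε),
    (∀ i, n ≤ i → TEx P d i) ↔
      HasInjectiveDimensionLT (ModuleCat.of A (CharacterModule M)) (n+1) := by
  induction n with
  | zero =>
    intro P d M _ _ ε h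
    rw [zero_add, ← flat_iff_dimLT]
    constructor
    · intro H; exact h.tex_zero_iff.1 (H 0 le_rfl)
    · intro _ i _; exact h.tex_of_flat i
  | succ n ih =>
    intro P d M _ _ ε h
    have hP := Module.Flat.iff_characterModule_injective.1 (h.flat 0)
    rw [Module.injective_iff_injective_object] at hP
    obtain ⟨w, hS⟩ := dual_shortExact (LinearMap.ker ε).subtype ε Subtype.val_injective
      (by intro x; simp) h.surj
    refine Iff.trans ?_ ((ih (P := fun i => P (i+1)) (d := fun i => d (i+1)) h.shift).trans (hS.hasInjectiveDimensionLT_X₃_iff n hP))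
    constructor
    · intro H i hi; exact H (i+1) (by omega)
    · intro H i hi
      obtain ⟨j, rfl⟩ : ∃ j, i = j + 1 := ⟨i - 1, by omega⟩
      exact H j (by omega)

end Res

section Noeth

variable {A : Type u} [CommRing A]

/-- The evaluation map `N ⊗ M⁺ → Hom(N, M)⁺`. -/
noncomputable def evMap (N M : Type u) [AddCommGroup N] [Module A N] [AddCommGroup M] [Module A M] :
    N ⊗[A] CharacterModule M →ₗ[A] CharacterModule (N →ₗ[A] M) :=
  TensorProduct.lift
    { toFun := fun n => CharacterModule.dual (LinearMap.applyₗ (R := A) n)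
      map_add' := fun a b => by
        ext c f
        change c (f (a + b)) = c (f a) + c (f b)
        rw [map_add, map_add]
      map_smul' := fun r a => by
        ext c f
        change c (f (r • a)) = c ((r • f) a)
        rw [map_smul]; rfl }

variable {M : Type u} [AddCommGroup M] [Module A M]

lemma evMap_tmul {N : Type u} [AddCommGroup N] [Module A N] (n : N) (c : CharacterModule M)
    (f : N →ₗ[A] M) : evMap N M (n ⊗ₜ[A] c) f = c (f n) := rfl

lemma evMap_nat {N N' : Type u} [AddCommGroup N] [Module A N] [AddCommGroup N'] [Module A N']
    (g : N →ₗ[A] N') :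
    evMap N' M ∘ₗ g.rTensor (CharacterModule M) =
      CharacterModule.dual (g.lcomp A M) ∘ₗ evMap N M := by
  ext n c f
  rfl

lemma evMap_bij_free {N : Type u} [AddCommGroup N] [Module A N] {ι : Type*} [Fintype ι]
    (b : Module.Basis ι A N) : Function.Bijective (evMap (A := A) N M) := by
  classical
  let inv : CharacterModule (N →ₗ[A] M) →ₗ[A] N ⊗[A] CharacterModule M :=
    ∑ j, (TensorProduct.mk A N (CharacterModule M) (b j)) ∘ₗ
      CharacterModule.dual (LinearMap.smulRightₗ (M₂ := N) (R := A) (M := M) (b.coord j))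
  have hinv : ∀ χ, inv χ = ∑ j, b j ⊗ₜ[A] (CharacterModule.dual
      (LinearMap.smulRightₗ (M₂ := N) (R := A) (M := M) (b.coord j)) χ) := by
    intro χ; rw [LinearMap.sum_apply]; rfl
  refine Function.bijective_iff_has_inverse.2 ⟨inv, ?_, ?_⟩
  · intro t
    suffices h : inv ∘ₗ evMap N M = LinearMap.id from DFunLike.congr_fun h t
    refine TensorProduct.ext' fun n c => ?_
    rw [LinearMap.comp_apply, hinv, LinearMap.id_apply]
    have : ∀ j, CharacterModule.dual
      (LinearMap.smulRightₗ (M₂ := N) (R := A) (M := M) (b.coord j)) (evMap N M (n ⊗ₜ[A] c)) =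
        b.coord j n • c := by
      intro j; ext m; rfl
    simp_rw [this, TensorProduct.tmul_smul, TensorProduct.smul_tmul']
    rw [← TensorProduct.sum_tmul]
    congr 1
    exact b.sum_repr n
  · intro χ
    refine CharacterModule.ext (A := N →ₗ[A] M) fun f => ?_
    rw [hinv, map_sum]
    have h1 : ∀ (s : Finset ι) (g : ι → CharacterModule (N →ₗ[A] M)),
        (∑ j ∈ s, g j) f = ∑ j ∈ s, g j f := by
      intro s g
      exact map_sum ({ toFun := fun c => c f, map_zero' := rfl, map_add' := fun _ _ => rfl } : CharacterModule (N →ₗ[A] M) →+ AddCircle (1 : ℚ)) g s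
    rw [h1]
    simp_rw [evMap_tmul]
    have h2 : ∀ j, (CharacterModule.dual
      (LinearMap.smulRightₗ (M₂ := N) (R := A) (M := M) (b.coord j)) χ) (f (b j)) =
        χ ((b.coord j).smulRight (f (b j))) := fun j => rfl
    simp_rw [h2]
    rw [← map_sum]
    congr 1
    refine b.ext fun i => ?_
    simp [LinearMap.sum_apply, Finsupp.single_apply]

lemma evMap_bij [IsNoetherianRing A] {N : Type u} [AddCommGroup N] [Module A N] [Module.Finite A N] :
    Function.Bijective (evMap (A := A) N M) := by
  obtain ⟨k, g, hg⟩ := Module.Finite.exists_fin' A N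
  obtain ⟨m, f, hf⟩ := Module.Finite.exists_fin' A (LinearMap.ker g)
  let f' : (Fin m → A) →ₗ[A] (Fin k → A) := (LinearMap.ker g).subtype ∘ₗ f
  have hex : Function.Exact f' g := by
    intro y
    constructor
    · intro hy
      obtain ⟨x, hx⟩ := hf ⟨y, hy⟩
      exact ⟨x, congrArg Subtype.val hx⟩
    · rintro ⟨x, rfl⟩
      exact (f x).2
  have hex2 : Function.Exact (g.lcomp A M) (f'.lcomp A M) := by
    intro φ
    constructor
    · intro hφ
      have hle : LinearMap.ker g ≤ LinearMap.ker φ := by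
        intro y hy
        obtain ⟨x, rfl⟩ := (hex y).1 hy
        exact DFunLike.congr_fun hφ x
      let e := g.quotKerEquivOfSurjective hg
      refine ⟨(LinearMap.ker g).liftQ φ hle ∘ₗ e.symm.toLinearMap, ?_⟩
      refine LinearMap.ext fun y => ?_
      change (LinearMap.ker g).liftQ φ hle (e.symm (g y)) = φ y
      have : e.symm (g y) = (LinearMap.ker g).mkQ y := by
        rw [LinearEquiv.symm_apply_eq]; rfl
      rw [this]; rfl
    · rintro ⟨ψ, rfl⟩
      refine LinearMap.ext fun x => ?_
      change ψ (g (f' x)) = 0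
      rw [hex.apply_apply_eq_zero, map_zero]
  have hinj : Function.Injective (g.lcomp A M) := by
    intro a b hab
    ext1 y
    obtain ⟨x, rfl⟩ := hg y
    exact DFunLike.congr_fun hab x
  exact LinearMap.bijective_of_surjective_of_bijective_of_right_exact
    (f'.rTensor (CharacterModule M)) (g.rTensor (CharacterModule M))
    (CharacterModule.dual (f'.lcomp A M)) (CharacterModule.dual (g.lcomp A M))
    (evMap _ M) (evMap _ M) (evMap N M) (evMap_nat f').symm (evMap_nat g).symm
    (rTensor_exact _ hex hg) (dual_exact _ _ hex2)
    (evMap_bij_free (Pi.basisFun A (Fin m))).2 (evMap_bij_free (Pi.basisFun A (Fin k)))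
    (LinearMap.rTensor_surjective _ hg)
    (CharacterModule.dual_surjective_of_injective _ hinj)

lemma flat_char_iff [IsNoetherianRing A] :
    Module.Flat A (CharacterModule M) ↔ Module.Injective A M := by
  rw [Module.Flat.iff_rTensor_injective', ← Module.Baer.iff_injective]
  have key : ∀ I : Ideal A, Function.Injective (I.subtype.rTensor (CharacterModule M)) ↔
      Function.Surjective (I.subtype.lcomp A M) := by
    intro I
    have h1 := evMap_bij (A := A) (M := M) (N := I)
    have h2 := evMap_bij (A := A) (M := M) (N := A)
    rw [← CharacterModule.dual_injective_iff_surjective]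
    have h3 := evMap_nat (M := M) I.subtype
    have h4 := congrArg (fun f => (DFunLike.coe f)) h3
    simp only [LinearMap.coe_comp] at h4
    rw [← h2.1.of_comp_iff, h4, Function.Injective.of_comp_iff' _ h1]
  simp_rw [key]
  unfold Module.Baer
  refine forall_congr' fun I => ?_
  unfold Function.Surjective
  simp_rw [DFunLike.ext_iff]
  simp [Subtype.forall]

lemma char_char_dim [IsNoetherianRing A] (n : ℕ) : ∀ (M : ModuleCat.{u} A),
    HasInjectiveDimensionLT M (n+1) ↔
    HasInjectiveDimensionLT (ModuleCat.of A (CharacterModule (CharacterModule M))) (n+1) := by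
  have h0 : ∀ (M : ModuleCat.{u} A), Injective M ↔
      Injective (ModuleCat.of A (CharacterModule (CharacterModule M))) := by
    intro M
    have h1 := Module.injective_iff_injective_object A M
    rw [← flat_char_iff, Module.Flat.iff_characterModule_injective,
      Module.injective_iff_injective_object A (CharacterModule (CharacterModule M))] at h1
    exact h1.symm
  induction n with
  | zero =>
    intro M
    rw [zero_add, ← injective_iff_hasInjectiveDimensionLT_one, h0,
      injective_iff_hasInjectiveDimensionLT_one]
  | succ n ih =>
    intro M
    let I := Injective.under M
    let i : M →ₗ[A] I := (Injective.ι M).hom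
    have hi : Function.Injective i := (ModuleCat.mono_iff_injective _).1 inferInstance
    let q := (LinearMap.range i).mkQ
    have hq : Function.Surjective q := Submodule.mkQ_surjective _
    have hex : Function.Exact i q := LinearMap.exact_map_mkQ_range i
    have hS : (ShortComplex.mk (Injective.ι M) (ModuleCat.ofHom q)
        (by ext1; exact hex.linearMap_comp_eq_zero)).ShortExact :=
      ModuleCat.shortComplex_shortExact _ hex hi hq
    obtain ⟨w, hS'⟩ := dual_shortExact (CharacterModule.dual q) (CharacterModule.dual i)
      (CharacterModule.dual_injective_of_surjective _ hq)
      (dual_exact_of_surjective _ _ hex hq)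
      (CharacterModule.dual_surjective_of_injective _ hi)
    have hI : Injective I := inferInstance
    rw [← hS.hasInjectiveDimensionLT_X₃_iff n hI,
      ← hS'.hasInjectiveDimensionLT_X₃_iff n ((h0 I).1 hI)]
    exact ih _

end Noeth

section Compare

variable {A : Type u} [CommRing A]

lemma subsingleton_ext_iff (N M : ModuleCat.{u} A) (i : ℕ) :
    Subsingleton (extGroup A N M (i+1)) ↔ Subsingleton (Abelian.Ext.{u} N M (i+1)) := by
  let R := projectiveResolution N
  have h1 : Subsingleton (extGroup A N M (i+1)) ↔
      ((R.complex.linearYonedaObj A M).sc' i (i+1) (i+2)).Exact := by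
    rw [← ModuleCat.isZero_iff_subsingleton, (R.isoExt (R := A) (i+1) M).isZero_iff,
      ← HomologicalComplex.exactAt_iff_isZero_homology,
      HomologicalComplex.exactAt_iff' _ i (i+1) (i+2) (by simp) (by simp)]
  rw [h1, ShortComplex.moduleCat_exact_iff]
  constructor
  · intro h
    refine ⟨fun a b => ?_⟩
    have h0 : ∀ a : Abelian.Ext.{u} N M (i+1), a = 0 := by
      intro a
      obtain ⟨f, hf, rfl⟩ := R.extMk_surjective a (i+2) rfl
      rw [R.extMk_eq_zero_iff f _ rfl hf i rfl]
      exact h f hf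
    rw [h0 a, h0 b]
  · intro h f hf
    exact (R.extMk_eq_zero_iff f (i+2) rfl hf i rfl).1 (Subsingleton.elim _ _)

lemma subsingleton_tor_iff (N M : ModuleCat.{u} A) (i : ℕ) :
    Subsingleton (torGroup A N M (i+1)) ↔
      Function.Exact (((projectiveResolution M).complex.d (i+2) (i+1)).hom.lTensor N)
       (((projectiveResolution M).complex.d (i+1) i).hom.lTensor N) := by
  let R := projectiveResolution M
  have h1 : Subsingleton (torGroup A N M (i+1)) ↔
      (((((MonoidalCategory.tensoringLeft (ModuleCat.{u} A)).obj N).mapHomologicalComplex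
        (ComplexShape.down ℕ)).obj R.complex).sc' (i+2) (i+1) i).Exact := by
    rw [← ModuleCat.isZero_iff_subsingleton]
    refine Iff.trans (R.isoLeftDerivedObj
      ((MonoidalCategory.tensoringLeft (ModuleCat.{u} A)).obj N) (i+1)).isZero_iff ?_
    rw [HomologicalComplex.homologyFunctor_obj,
      ← HomologicalComplex.exactAt_iff_isZero_homology,
      HomologicalComplex.exactAt_iff' _ (i+2) (i+1) i (by simp) (by simp)]
  rw [h1, ShortComplex.ShortExact.moduleCat_exact_iff_function_exact]
  exact Iff.rfl

lemma fres (M : ModuleCat.{u} A) : FRes A (fun i => (projectiveResolution M).complex.X i)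
    (fun i => ((projectiveResolution M).complex.d (i+1) i).hom) M
      ((projectiveResolution M).π.f 0).hom where
  surj := (ModuleCat.epi_iff_surjective ((projectiveResolution M).π.f 0)).1 inferInstance
  ex0 := by
    have := ShortComplex.exact_of_g_is_cokernel (ShortComplex.mk _ _
      (projectiveResolution M).complex_d_comp_π_f_zero)
      (projectiveResolution M).isColimitCokernelCofork
    rw [ShortComplex.ShortExact.moduleCat_exact_iff_function_exact] at this
    exact this
  ex i := by
    have := (projectiveResolution M).exact_succ i
    rw [ShortComplex.ShortExact.moduleCat_exact_iff_function_exact] at this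
    exact this
  flat i := by
    have h : Projective ((projectiveResolution M).complex.X i) := inferInstance
    have : Module.Projective A ((projectiveResolution M).complex.X i) :=
      (IsProjective.iff_projective _).2 h
    infer_instance

lemma inj_cond_iff (M : ModuleCat.{u} A) (n : ℕ) :
    (∀ (N : ModuleCat.{u} A) (i : ℕ), (n : ℕ∞) < (i : ℕ∞) → Subsingleton (extGroup A N M i)) ↔
      HasInjectiveDimensionLT M (n+1) := by
  rw [hasInjectiveDimensionLT_iff.{u}]
  constructor
  · intro h i hi Y e
    obtain ⟨j, rfl⟩ : ∃ j, i = j + 1 := ⟨i - 1, by omega⟩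
    have := (subsingleton_ext_iff Y M j).1 (h Y _ (by exact_mod_cast hi))
    exact Subsingleton.elim _ _
  · intro h N i hi
    have hi' : n + 1 ≤ i := by exact_mod_cast hi
    obtain ⟨j, rfl⟩ : ∃ j, i = j + 1 := ⟨i - 1, by omega⟩
    rw [subsingleton_ext_iff]
    exact ⟨fun a b => by rw [h _ hi' a, h _ hi' b]⟩

lemma flat_cond_iff (M : ModuleCat.{u} A) (n : ℕ) :
    (∀ (N : ModuleCat.{u} A) (i : ℕ), (n : ℕ∞) < (i : ℕ∞) → Subsingleton (torGroup A N M i)) ↔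
      HasInjectiveDimensionLT (ModuleCat.of A (CharacterModule M)) (n+1) := by
  refine Iff.trans ?_ ((fres M).tex_iff n)
  constructor
  · intro h i hi N
    exact (subsingleton_tor_iff N M i).1 (h N (i+1) (by exact_mod_cast Nat.lt_succ_of_le hi))
  · intro h N i hi
    have hi' : n < i := by exact_mod_cast hi
    obtain ⟨j, rfl⟩ : ∃ j, i = j + 1 := ⟨i - 1, by omega⟩
    exact (subsingleton_tor_iff N M j).2 (h j (by omega) N)

lemma flatDim_eq (M : ModuleCat.{u} A) :
    flatDim A M = injDim A (ModuleCat.of A (CharacterModule M)) := by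
  unfold flatDim injDim
  congr 1
  ext n
  induction n with
  | top => simp
  | coe n => exact (flat_cond_iff M n).trans (inj_cond_iff _ n).symm

lemma injDim_eq [IsNoetherianRing A] (M : ModuleCat.{u} A) :
    injDim A M = flatDim A (ModuleCat.of A (CharacterModule M)) := by
  unfold flatDim injDim
  congr 1
  ext n
  induction n with
  | top => simp
  | coe n =>
    exact (inj_cond_iff M n).trans ((char_char_dim n M).trans
      (flat_cond_iff (ModuleCat.of A (CharacterModule M)) n).symm)

end Compare

theorem bigFinitisticFlatDim_eq_bigFinitisticInjDim
    (A : Type u) [CommRing A] [IsNoetherianRing A] :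
    sSup {d : ℕ∞ | ∃ M : ModuleCat.{u} A, flatDim A M ≠ ⊤ ∧ flatDim A M = d} =
      sSup {d : ℕ∞ | ∃ M : ModuleCat.{u} A, injDim A M ≠ ⊤ ∧ injDim A M = d} := by
  congr 1
  ext d
  constructor
  · rintro ⟨M, h1, h2⟩
    exact ⟨_, by rwa [← flatDim_eq M], by rwa [← flatDim_eq M]⟩
  · rintro ⟨M, h1, h2⟩
    exact ⟨_, by rwa [← injDim_eq M], by rwa [← injDim_eq M]⟩
end

section
/- Let (A, m) be a commutative noetherian local ring with residue field k. Then the small finitistic projective dimension of A equals the depth of A; that is, sup{ projdim_A(M) : M a nonzero finitely generated A-module with projdim_A(M) < ∞ } = depth(A). -/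
/-!
STATEMENT 12: Let (A, m) be a commutative noetherian local ring with residue field k.
Then the small finitistic projective dimension of A equals the depth of A:
sup{ projdim_A(M) : M nonzero finitely generated with projdim_A(M) < ∞ } = depth(A).
-/

open CategoryTheory

universe u

open Abelian in
theorem bridge (A : Type u) [CommRing A] (M N : ModuleCat.{u} A) (i : ℕ) :
    Subsingleton (((Ext A (ModuleCat.{u} A) i).obj (Opposite.op M)).obj N) ↔
      Subsingleton (Abelian.Ext.{u} M N i) := by
  let P := projectiveResolution M
  rw [((P.isoExt (R := A) i N).toLinearEquiv).toEquiv.subsingleton_congr,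
    ← ModuleCat.isZero_iff_subsingleton, ← HomologicalComplex.exactAt_iff_isZero_homology]
  cases i with
  | zero =>
    rw [Abelian.Ext.homEquiv₀.subsingleton_congr,
      HomologicalComplex.exactAt_iff' _ 0 0 1 (by simp) (by simp),
      ShortComplex.moduleCat_exact_iff]
    constructor
    · intro h
      refine subsingleton_of_forall_eq 0 fun f => ?_
      have hc := P.complex_d_comp_π_f_zero
      have h1 : P.complex.d 1 0 ≫ (P.π.f 0 ≫ f) = 0 := by
        exact (Category.assoc _ _ _).symm.trans ((congrArg (· ≫ f) hc).trans Limits.zero_comp)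
      obtain ⟨g, hg⟩ := h (P.π.f 0 ≫ f) h1
      have hg' : P.complex.d 0 0 ≫ (g : P.complex.X 0 ⟶ N) = P.π.f 0 ≫ f := hg
      have h2 : P.complex.d 0 0 = 0 := P.complex.shape _ _ (by simp)
      have hg2 : P.π.f 0 ≫ f = 0 :=
        hg'.symm.trans ((congrArg (· ≫ (g : P.complex.X 0 ⟶ N)) h2).trans Limits.zero_comp)
      have he : Epi (P.π.f 0) := inferInstance
      exact (cancel_epi (P.π.f 0)).1 (hg2.trans Limits.comp_zero.symm)
    · intro h f hf
      have hf' : P.complex.d 1 0 ≫ (f : P.complex.X 0 ⟶ N) = 0 := hf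
      have he : Epi (P.π.f 0) := inferInstance
      have h3 : f = 0 := by
        have h4 := P.exact₀.g_desc f hf'
        rw [← h4]
        have h5 : P.exact₀.desc f hf' = 0 := Subsingleton.elim (α := (M ⟶ N)) _ _
        rw [h5]
        exact Limits.comp_zero
      exact ⟨0, by rw [h3]; simp⟩
  | succ n =>
    rw [HomologicalComplex.exactAt_iff' _ n (n+1) (n+2) (by simp) (by simp),
      ShortComplex.moduleCat_exact_iff]
    constructor
    · intro h
      refine subsingleton_of_forall_eq 0 fun α => ?_
      obtain ⟨f, hf, rfl⟩ := P.extMk_surjective α (n+2) rfl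
      rw [P.extMk_eq_zero_iff f _ _ hf n rfl]
      exact h f hf
    · intro h f hf
      exact (P.extMk_eq_zero_iff f (n+2) rfl hf n rfl).1 (Subsingleton.elim _ _)

theorem kill {A : Type u} [CommRing A] [IsLocalRing A] {N : ModuleCat.{u} A} {i : ℕ}
    (y : Abelian.Ext.{u} (ModuleCat.of A (IsLocalRing.ResidueField A)) N i) (r : A)
    (hr : r ∈ IsLocalRing.maximalIdeal A) : r • y = 0 := by
  have h0 : r • 𝟙 (ModuleCat.of A (IsLocalRing.ResidueField A)) = 0 := by
    ext x
    obtain ⟨x, rfl⟩ := IsLocalRing.residue_surjective x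
    have : r • (IsLocalRing.residue A x) = 0 := by
      rw [Algebra.smul_def]
      have : algebraMap A (IsLocalRing.ResidueField A) r = 0 :=
        (IsLocalRing.residue_eq_zero_iff r).2 hr
      rw [this, zero_mul]
    exact this
  rw [← Abelian.Ext.mk₀_id_comp y, ← Abelian.Ext.smul_comp, ← Abelian.Ext.mk₀_smul, h0]
  simp

/-- existence of modules of given projective dimension -/
theorem exists_pd (A : Type u) [CommRing A] [IsNoetherianRing A] [IsLocalRing A] (n : ℕ)
    (N : ModuleCat.{u} A) [Nontrivial N] [Module.Finite A N]
    (h : ∀ i < n, Subsingleton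
      (Abelian.Ext.{u} (ModuleCat.of A (IsLocalRing.ResidueField A)) N i)) :
    ∃ M : ModuleCat.{u} A, Nontrivial M ∧ Module.Finite A M ∧
      projectiveDimension M = projectiveDimension N + n := by
  induction n generalizing N with
  | zero => exact ⟨N, ‹_›, ‹_›, by simp⟩
  | succ n ih =>
    have h0 := h 0 (by omega)
    rw [Abelian.Ext.homEquiv₀.subsingleton_congr, ModuleCat.homEquiv.subsingleton_congr] at h0
    have : Module.Finite A (IsLocalRing.ResidueField A) :=
      Module.Finite.of_surjective (Algebra.linearMap A _) IsLocalRing.residue_surjective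
    obtain ⟨x, hx, reg⟩ := (IsSMulRegular.subsingleton_linearMap_iff).1 h0
    have mem : x ∈ IsLocalRing.maximalIdeal A := by
      have := Module.mem_annihilator.1 hx (1 : IsLocalRing.ResidueField A)
      rw [Algebra.smul_def, mul_one] at this
      exact (IsLocalRing.residue_eq_zero_iff x).1 this
    have := nontrivial_quotSMulTop_of_mem_maximalIdeal N mem
    obtain ⟨M, h1, h2, h3⟩ := ih (ModuleCat.of A (QuotSMulTop x N)) (by
      intro i hi
      refine subsingleton_of_forall_eq 0 fun α => ?_
      have hS := reg.smulShortComplex_shortExact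
      have := h i (by omega)
      have := h (i+1) (by omega)
      obtain ⟨y, hy⟩ := Abelian.Ext.covariant_sequence_exact₃ _ hS α rfl
        (Subsingleton.elim (α := Abelian.Ext.{u} (ModuleCat.of A (IsLocalRing.ResidueField A)) N (i+1)) _ _)
      rw [← hy, Subsingleton.elim (α := Abelian.Ext.{u} (ModuleCat.of A (IsLocalRing.ResidueField A)) N i) y 0]
      exact Abelian.Ext.zero_comp ..)
    refine ⟨M, h1, h2, ?_⟩
    rw [h3, ModuleCat.projectiveDimension_quotSMulTop_eq_succ_of_isSMulRegular N x reg mem]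
    push_cast
    rw [add_assoc, add_comm (1 : WithBot ℕ∞)]

theorem projDim_le_iff (A : Type u) [CommRing A] (M : ModuleCat.{u} A) (n : ℕ) :
    projDim A M ≤ n ↔ HasProjectiveDimensionLE M n := by
  have key : ∀ d : ℕ∞, (∀ (N : ModuleCat.{u} A) (i : ℕ), d < (i : ℕ∞) →
    Subsingleton (extGroup A M N i)) ↔ ∀ (N : ModuleCat.{u} A) (i : ℕ), d < (i : ℕ∞) →
      Subsingleton (Abelian.Ext.{u} M N i) := fun d => by simp only [bridge]
  constructor
  · intro h
    have := csInf_mem (s := {n : ℕ∞ | ∀ (N : ModuleCat.{u} A) (i : ℕ), n < (i : ℕ∞) →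
      Subsingleton (extGroup A M N i)}) ⟨⊤, by simp⟩
    refine HasProjectiveDimensionLT.mk fun i hi Y e => ?_
    have := (key _).1 this Y i (lt_of_le_of_lt h (by exact_mod_cast hi))
    exact Subsingleton.elim _ _
  · intro h
    refine sInf_le ?_
    refine (key _).2 fun N i hi => ?_
    exact HasProjectiveDimensionLT.subsingleton M (n+1) i (by exact_mod_cast hi) N

open Module TensorProduct in
/-- If an injection of free modules does not split, some unimodular element maps into `m F`. -/
theorem exists_elt {A K F : Type u} [CommRing A] [IsLocalRing A] [AddCommGroup K] [Module A K]
    [AddCommGroup F] [Module A F] [Module.Finite A K] [Module.Free A K] [Module.Finite A F]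
    [Module.Free A F] (l : K →ₗ[A] F) (hl : ¬ ∃ l', l' ∘ₗ l = LinearMap.id) :
    ∃ (x : K) (φ : K →ₗ[A] A), φ x = 1 ∧
      ∀ i, (Free.chooseBasis A F).repr (l x) i ∈ IsLocalRing.maximalIdeal A := by
  rw [IsLocalRing.split_injective_iff_lTensor_residueField_injective,
    injective_iff_map_eq_zero] at hl
  push Not at hl
  obtain ⟨z, hz, hz0⟩ := hl
  obtain ⟨x, rfl⟩ : ∃ x : K, (1 : IsLocalRing.ResidueField A) ⊗ₜ[A] x = z := by
    have := TensorProduct.mk_surjective A K (IsLocalRing.ResidueField A)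
      IsLocalRing.residue_surjective
    exact this z
  have h1 : ∃ i, IsUnit ((Free.chooseBasis A K).repr x i) := by
    by_contra! hcon
    apply hz0
    rw [← (Free.chooseBasis A K).sum_repr x, TensorProduct.tmul_sum]
    refine Finset.sum_eq_zero fun i _ => ?_
    rw [← TensorProduct.smul_tmul, Algebra.smul_def, mul_one]
    have : algebraMap A (IsLocalRing.ResidueField A) ((Free.chooseBasis A K).repr x i) = 0 :=
      (IsLocalRing.residue_eq_zero_iff _).2 (hcon i)
    rw [this, TensorProduct.zero_tmul]
  obtain ⟨i, hi⟩ := h1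
  obtain ⟨u, hu⟩ := hi
  refine ⟨x, (↑u⁻¹ : A) • (Free.chooseBasis A K).coord i, ?_, fun j => ?_⟩
  · simp [← hu]
  · have := congrArg (TensorProduct.rid A _ ∘
      ((Free.chooseBasis A F).coord j).lTensor (IsLocalRing.ResidueField A)) hz
    simp only [Function.comp, LinearMap.lTensor_tmul, TensorProduct.rid_tmul, map_zero,
      Basis.coord_apply] at this
    rw [Algebra.smul_def, mul_one] at this
    exact (IsLocalRing.residue_eq_zero_iff _).1 this

theorem comp_span_eq_zero {A : Type u} [CommRing A] [IsLocalRing A]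
    {F : ModuleCat.{u} A} [Module.Finite A F] [Module.Free A F] {t : ℕ}
    (y : Abelian.Ext.{u} (ModuleCat.of A (IsLocalRing.ResidueField A)) (ModuleCat.of A A) t)
    (v : F)
    (hv : ∀ i, (Module.Free.chooseBasis A F).repr v i ∈ IsLocalRing.maximalIdeal A) :
    y.comp (Abelian.Ext.mk₀ (ModuleCat.ofHom (LinearMap.toSpanSingleton A F v)))
      (add_zero t) = 0 := by
  let T : F →ₗ[A] Abelian.Ext.{u} (ModuleCat.of A (IsLocalRing.ResidueField A)) F t :=
    { toFun := fun v => y.comp (Abelian.Ext.mk₀ (ModuleCat.ofHom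
        (LinearMap.toSpanSingleton A F v))) (add_zero t)
      map_add' := fun v w => by
        rw [← Abelian.Ext.comp_add, ← Abelian.Ext.mk₀_add]
        congr 2
        ext
        simp
      map_smul' := fun r v => by
        rw [RingHom.id_apply, ← Abelian.Ext.comp_smul, ← Abelian.Ext.mk₀_smul]
        congr 2
        ext
        simp }
  change T v = 0
  rw [← (Module.Free.chooseBasis A F).sum_repr v, map_sum]
  refine Finset.sum_eq_zero fun i _ => ?_
  rw [map_smul]
  exact kill _ _ (hv i)

theorem pd_zero_ext {A : Type u} [CommRing A] [IsLocalRing A] [IsNoetherianRing A]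
    (M : ModuleCat.{u} A) [Nontrivial M] [Module.Finite A M] [Module.Free A M] (t : ℕ)
    (k : ModuleCat.{u} A)
    (h : ¬ Subsingleton (Abelian.Ext.{u} k (ModuleCat.of A A) t)) :
    ¬ Subsingleton (Abelian.Ext.{u} k M t) := by
  intro hs
  apply h
  refine subsingleton_of_forall_eq 0 fun y => ?_
  let b := Module.Free.chooseBasis A M
  obtain ⟨i⟩ : Nonempty (Module.Free.ChooseBasisIndex A M) := b.index_nonempty
  let f : ModuleCat.of A A ⟶ M := ModuleCat.ofHom (LinearMap.toSpanSingleton A M (b i))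
  let g : M ⟶ ModuleCat.of A A := ModuleCat.ofHom (b.coord i)
  have hfg : f ≫ g = 𝟙 _ := by
    ext
    simp [f, g]
  have := Subsingleton.elim (y.comp (Abelian.Ext.mk₀ f) (add_zero t)) 0
  have h2 := congrArg (fun z => Abelian.Ext.comp z (Abelian.Ext.mk₀ g) (add_zero t)) this
  simpa [hfg] using h2

theorem free_ext_zero {A : Type u} [CommRing A] [Nontrivial A]
    (M : ModuleCat.{u} A) [Module.Finite A M] [Module.Free A M] (t : ℕ)
    (k : ModuleCat.{u} A) [Subsingleton (Abelian.Ext.{u} k (ModuleCat.of A A) t)]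
    (y : Abelian.Ext.{u} k M t) : y = 0 := by
  let b := Module.Free.chooseBasis A M
  let f (i) : ModuleCat.of A A ⟶ M := ModuleCat.ofHom (LinearMap.toSpanSingleton A M (b i))
  let g (i) : M ⟶ ModuleCat.of A A := ModuleCat.ofHom (b.coord i)
  let T : (M ⟶ M) →+ Abelian.Ext.{u} k M t :=
    AddMonoidHom.mk' (fun a => y.comp (Abelian.Ext.mk₀ a) (add_zero t)) (fun a c => by
      rw [Abelian.Ext.mk₀_add, Abelian.Ext.comp_add])
  have hsum : 𝟙 M = ∑ i, g i ≫ f i := by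
    ext x
    simp only [ModuleCat.hom_sum, LinearMap.sum_apply]
    simpa [f, g] using (b.sum_repr x).symm
  have h1 : T (𝟙 M) = y := by simp [T]
  rw [← h1, hsum, map_sum]
  refine Finset.sum_eq_zero fun i _ => ?_
  change y.comp (Abelian.Ext.mk₀ (g i ≫ f i)) (add_zero t) = 0
  rw [← Abelian.Ext.mk₀_comp_mk₀, ← Abelian.Ext.comp_assoc_of_third_deg_zero,
    Subsingleton.elim (y.comp (Abelian.Ext.mk₀ (g i)) (add_zero t)) 0, Abelian.Ext.zero_comp]

theorem main_upper {A : Type u} [CommRing A] [IsLocalRing A] [IsNoetherianRing A] (t : ℕ)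
    (h0 : ∀ i < t, Subsingleton (Abelian.Ext.{u} (ModuleCat.of A (IsLocalRing.ResidueField A))
      (ModuleCat.of A A) i))
    (ht : ¬ Subsingleton (Abelian.Ext.{u} (ModuleCat.of A (IsLocalRing.ResidueField A))
      (ModuleCat.of A A) t)) (n : ℕ)
    (M : ModuleCat.{u} A) [Nontrivial M] [Module.Finite A M]
    (h1 : HasProjectiveDimensionLT M (n + 1)) (h2 : ¬ HasProjectiveDimensionLT M n) :
    ∃ s, s + n = t ∧ ¬ Subsingleton
      (Abelian.Ext.{u} (ModuleCat.of A (IsLocalRing.ResidueField A)) M s) := by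
  induction n generalizing M with
  | zero =>
    rw [zero_add, ← projective_iff_hasProjectiveDimensionLT_one,
      ← IsProjective.iff_projective] at h1
    have : Module.Free A M := Module.free_of_flat_of_isLocalRing
    exact ⟨t, rfl, pd_zero_ext M t _ ht⟩
  | succ n ih =>
    rcases Module.exists_finite_presentation A M with ⟨F, _, _, _, _, f, surjf⟩
    let S : ShortComplex (ModuleCat.{u} A) := f.shortComplexKer
    have hS : S.ShortExact := LinearMap.shortExact_shortComplexKer surjf
    have hK1 : HasProjectiveDimensionLT S.X₁ (n + 1) :=
      (hS.hasProjectiveDimensionLT_X₃_iff n inferInstance).1 h1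
    have hfin : Module.Finite A S.X₁ := inferInstance
    -- a nonzero class killed by the inclusion
    suffices H : ∃ s, s + n = t ∧
        ∃ y : Abelian.Ext.{u} (ModuleCat.of A (IsLocalRing.ResidueField A)) S.X₁ s,
          y ≠ 0 ∧ y.comp (Abelian.Ext.mk₀ S.f) (add_zero s) = 0 by
      obtain ⟨s, hs, y, hy, hy0⟩ := H
      cases s with
      | zero =>
        exfalso
        apply hy
        have := hS.mono_f
        apply Abelian.Ext.postcomp_mk₀_injective_of_mono _ S.f
        simpa using hy0
      | succ s =>
        obtain ⟨z, hz⟩ := Abelian.Ext.covariant_sequence_exact₁ _ hS y hy0 rfl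
        refine ⟨s, by omega, fun hsub => hy ?_⟩
        rw [← hz, Subsingleton.elim (α := Abelian.Ext.{u}
          (ModuleCat.of A (IsLocalRing.ResidueField A)) M s) z 0]
        exact Abelian.Ext.zero_comp ..
    cases n with
    | zero =>
      have hproj := hK1
      rw [zero_add, ← projective_iff_hasProjectiveDimensionLT_one,
        ← IsProjective.iff_projective] at hproj
      have : Module.Free A S.X₁ := Module.free_of_flat_of_isLocalRing
      refine ⟨t, rfl, ?_⟩
      obtain ⟨x, φ, hφ, hx⟩ := exists_elt (LinearMap.ker f).subtype (by
        rintro ⟨l', hl'⟩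
        apply h2
        rw [zero_add, ← projective_iff_hasProjectiveDimensionLT_one]
        have := hS.epi_g
        let σ := ShortComplex.Splitting.ofExactOfRetraction S hS.exact (ModuleCat.ofHom l')
          (ModuleCat.hom_ext hl') hS.epi_g
        have hp : Projective S.X₂ := inferInstance
        exact (Retract.mk (X := M) (Y := S.X₂) σ.s S.g σ.s_g).projective)
      have hne : ∃ y : Abelian.Ext.{u} (ModuleCat.of A (IsLocalRing.ResidueField A))
          (ModuleCat.of A A) t, y ≠ 0 := by
        by_contra! hcon
        exact ht (subsingleton_of_forall_eq 0 hcon)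
      obtain ⟨y, hy⟩ := hne
      let e : ModuleCat.of A A ⟶ S.X₁ :=
        ModuleCat.ofHom (LinearMap.toSpanSingleton A (LinearMap.ker f) x)
      let g : S.X₁ ⟶ ModuleCat.of A A := ModuleCat.ofHom φ
      have heg : e ≫ g = 𝟙 _ := by
        ext
        simp [e, g, hφ]
      refine ⟨y.comp (Abelian.Ext.mk₀ e) (add_zero t), fun hz => hy ?_, ?_⟩
      · have h2 := congrArg (fun z => Abelian.Ext.comp z (Abelian.Ext.mk₀ g) (add_zero t)) hz
        simpa [heg] using h2
      · have := comp_span_eq_zero (F := ModuleCat.of A F) y _ hx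
        rw [Abelian.Ext.comp_assoc_of_third_deg_zero, Abelian.Ext.mk₀_comp_mk₀]
        convert this using 3
        ext
        simp [e, S]
    | succ n =>
      have hK2 : ¬ HasProjectiveDimensionLT S.X₁ (n + 1) := fun h =>
        h2 ((hS.hasProjectiveDimensionLT_X₃_iff n inferInstance).2 h)
      have hnt : Nontrivial S.X₁ := by
        by_contra hcon
        rw [not_nontrivial_iff_subsingleton, ← ModuleCat.isZero_iff_subsingleton] at hcon
        have := hcon.hasProjectiveDimensionLT_zero
        exact hK2 (hasProjectiveDimensionLT_of_ge _ 0 _ (by omega))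
      obtain ⟨s, hs, hsn⟩ := ih S.X₁ hK1 hK2
      refine ⟨s, hs, ?_⟩
      by_contra! hcon
      refine hsn (subsingleton_of_forall_eq 0 fun y => ?_)
      by_contra hy
      refine hcon y hy ?_
      have := h0 s (by omega)
      exact free_ext_zero (ModuleCat.of A F) s _ _

theorem smallFinitisticProjDim_eq_depth
    (A : Type u) [CommRing A] [IsNoetherianRing A] [IsLocalRing A] :
    sSup {d : ℕ∞ | ∃ M : ModuleCat.{u} A, Nontrivial M ∧ Module.Finite A M ∧
      projDim A M ≠ ⊤ ∧ projDim A M = d} = ringDepth A := by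
  apply le_antisymm
  · refine sSup_le ?_
    rintro d ⟨M, hM, hf, hd, rfl⟩
    refine le_sInf ?_
    rintro _ ⟨i, rfl, hi⟩
    rw [bridge] at hi
    classical
    have hex : ∃ t, ¬ Subsingleton (Abelian.Ext.{u} (ModuleCat.of A (IsLocalRing.ResidueField A))
      (ModuleCat.of A A) t) := ⟨i, hi⟩
    obtain ⟨n, hn⟩ := ENat.ne_top_iff_exists.1 hd
    have hle : HasProjectiveDimensionLT M (n + 1) := (projDim_le_iff A M n).1 hn.ge
    have hlt : ¬ HasProjectiveDimensionLT M n := by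
      intro h
      cases n with
      | zero =>
        have := isZero_of_hasProjectiveDimensionLT_zero M
        rw [ModuleCat.isZero_iff_subsingleton] at this
        exact not_subsingleton M this
      | succ n =>
        have := (projDim_le_iff A M n).2 h
        rw [← hn] at this
        norm_cast at this
        omega
    obtain ⟨s, hs, -⟩ := main_upper (Nat.find hex)
      (fun j hj => not_not.1 (Nat.find_min hex hj)) (Nat.find_spec hex) n M hle hlt
    have := Nat.find_min' hex hi
    rw [← hn]
    exact_mod_cast (by omega : n ≤ i)
  · have key : ∀ n : ℕ, (n : ℕ∞) ≤ ringDepth A → (n : ℕ∞) ≤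
        sSup {d : ℕ∞ | ∃ M : ModuleCat.{u} A, Nontrivial M ∧ Module.Finite A M ∧
          projDim A M ≠ ⊤ ∧ projDim A M = d} := by
      intro n hn
      obtain ⟨M, h1, h2, h3⟩ := exists_pd A n (ModuleCat.of A A) (by
        intro i hi
        by_contra hcon
        rw [← bridge] at hcon
        have := hn.trans (sInf_le ⟨i, rfl, hcon⟩)
        norm_cast at this
        omega)
      have hp : Projective (ModuleCat.of A A) := inferInstance
      rw [ModuleCat.projectiveDimension_eq_zero_of_projective (ModuleCat.of A A), zero_add] at h3
      have hle := (projDim_le_iff A M n).2 ((projectiveDimension_le_iff M n).1 h3.le)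
      refine le_sSup_of_le ⟨M, h1, h2, ne_top_of_le_ne_top (ENat.natCast_ne_top n) hle, rfl⟩ ?_
      by_contra! hlt
      obtain ⟨m, hm⟩ := ENat.ne_top_iff_exists.1 hlt.ne_top
      have h4 := (projectiveDimension_le_iff M m).2 ((projDim_le_iff A M m).1 hm.ge)
      rw [h3] at h4
      rw [← hm] at hlt
      norm_cast at h4 hlt
      omega
    exact ENat.forall_natCast_le_iff_le.1 key
end

section
/- Let φ: A → B be a flat, essentially of finite type homomorphism of commutative noetherian rings, and regard B as a module over the ring B ⊗_A B via the multiplication map B ⊗_A B → B. If B has finite projective dimension as a B ⊗_A B-module, then the Hochschild homology and cohomology of B over A vanish above the Krull dimension of B ⊗_A B: Tor_i^{B ⊗_A B}(B, B) = 0 and Ext^i_{B ⊗_A B}(B, B) = 0 for all i > dim(B ⊗_A B). -/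
/-!
STATEMENT 16: Let φ : A → B be a flat, essentially of finite type homomorphism of
commutative noetherian rings, and regard B as a module over B ⊗_A B via the
multiplication map.  If B has finite projective dimension as a B ⊗_A B-module, then the
Hochschild homology and cohomology of B over A vanish above the Krull dimension of
B ⊗_A B: Tor_i^{B ⊗_A B}(B, B) = 0 and Ext^i_{B ⊗_A B}(B, B) = 0 for all
i > dim(B ⊗_A B).
-/

open CategoryTheory

universe u

open scoped TensorProduct

/-- `B` as a module over `B ⊗[A] B`, via the multiplication map `B ⊗[A] B → B`. -/
noncomputable def mulModule (A : Type u) [CommRing A] (B : Type u) [CommRing B]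
    [Algebra A B] : Module (B ⊗[A] B) B :=
  Module.compHom B (Algebra.TensorProduct.lmul' A (S := B)).toRingHom

section HochschildAuxSection

namespace HochschildAux

open IsLocalRing

/-- depth zero: finite projective dimension implies projective -/
lemma aux_free_of_socle {R : Type u} [CommRing R] [IsLocalRing R] [IsNoetherianRing R]
    (s : R) (hs : s ≠ 0) (hsm : ∀ r ∈ maximalIdeal R, r * s = 0)
    {K F M : Type u} [AddCommGroup K] [AddCommGroup F] [AddCommGroup M]
    [Module R K] [Module R F] [Module R M] [Module.Finite R K] [Module.Finite R F]
    [Module.Free R K] [Module.Free R F]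
    (f : K →ₗ[R] F) (g : F →ₗ[R] M) (hf : Function.Injective f) (hg : Function.Surjective g)
    (hfg : Function.Exact f g) : Module.Free R M := by
  refine Module.free_of_lTensor_residueField_injective f g hg hfg ?_
  rw [injective_iff_map_eq_zero]
  intro z hz
  obtain ⟨v, rfl⟩ := TensorProduct.mk_surjective R K (ResidueField R)
    Ideal.Quotient.mk_surjective z
  simp only [TensorProduct.mk_apply, LinearMap.lTensor_tmul] at hz ⊢
  let φ : ResidueField R →ₗ[R] R :=
    Submodule.liftQ (maximalIdeal R) (LinearMap.toSpanSingleton R R s) (by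
      intro r hr; simpa using hsm r hr)
  have h1 : φ 1 = s := by
    change Submodule.liftQ (maximalIdeal R) (LinearMap.toSpanSingleton R R s) _
      (Submodule.Quotient.mk 1) = s
    exact (Submodule.liftQ_apply _ _ _).trans (by simp)
  have h2 : s • f v = 0 := by
    have := congrArg (TensorProduct.lift (LinearMap.lsmul R F ∘ₗ φ)) hz
    simpa [h1] using this
  have h3 : s • v = 0 := hf (by simpa using h2)
  let b := Module.Free.chooseBasis R K
  rw [← b.sum_repr v, TensorProduct.tmul_sum]
  refine Finset.sum_eq_zero fun i _ ↦ ?_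
  have h4 : s * b.repr v i = 0 := by
    have := congrArg (fun w ↦ b.repr w i) h3
    simpa using this
  have h5 : b.repr v i ∈ maximalIdeal R := by
    rw [mem_maximalIdeal, mem_nonunits_iff]
    intro hu
    exact hs (hu.mul_left_eq_zero.mp h4)
  rw [TensorProduct.tmul_smul, TensorProduct.smul_tmul', Algebra.smul_def, mul_one,
    ResidueField.algebraMap_eq, (residue_eq_zero_iff _).mpr h5, TensorProduct.zero_tmul]

lemma aux_projective_of_socle {R : Type u} [CommRing R] [IsLocalRing R] [IsNoetherianRing R]
    (s : R) (hs : s ≠ 0) (hsm : ∀ r ∈ maximalIdeal R, r * s = 0) (n : ℕ)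
    (M : ModuleCat.{u} R) [Module.Finite R M] (h : HasProjectiveDimensionLE M n) :
    Projective M := by
  induction n generalizing M with
  | zero => exact (projective_iff_hasProjectiveDimensionLE_zero M).mpr h
  | succ n ih =>
    rcases Module.exists_finite_presentation R M with ⟨F, _, _, _, _, f, surjf⟩
    let S := f.shortComplexKer
    have S_exact := LinearMap.shortExact_shortComplexKer surjf
    have proj := ModuleCat.projective_of_categoryTheory_projective S.X₂
    have hK := (S_exact.hasProjectiveDimensionLT_X₃_iff n proj).mp h
    have pK := ih (ModuleCat.of R (LinearMap.ker f)) hK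
    rw [← IsProjective.iff_projective] at pK ⊢
    have : Module.Free R (LinearMap.ker f) := by
      have : Module.Projective R (LinearMap.ker f) := pK
      exact Module.free_of_flat_of_isLocalRing
    have := aux_free_of_socle s hs hsm (LinearMap.ker f).subtype f
      (LinearMap.ker f).injective_subtype surjf (LinearMap.exact_subtype_ker_map f)
    exact Module.Projective.of_free

open Pointwise

lemma aux_projective_quot {R : Type u} [CommRing R] [IsLocalRing R] [IsNoetherianRing R]
    (x : R) (hx : x ∈ maximalIdeal R) (N : Type u) [AddCommGroup N] [Module R N]
    [Module.Finite R N] (hN : IsSMulRegular N x) :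
    Module.Projective R N ↔ Module.Projective (R ⧸ Ideal.span {x}) (QuotSMulTop x N) := by
  have hne : Ideal.span {x} ≠ ⊤ := fun h ↦ by
    have := (Ideal.span_singleton_le_iff_mem (maximalIdeal R)).mpr hx
    rw [h, top_le_iff] at this
    exact (maximalIdeal.isMaximal R).ne_top this
  have : Nontrivial (R ⧸ Ideal.span {x}) := Ideal.Quotient.nontrivial_iff.mpr hne
  have : IsLocalRing (R ⧸ Ideal.span {x}) :=
    IsLocalRing.of_surjective' _ Ideal.Quotient.mk_surjective
  have := Module.Finite.of_restrictScalars_finite R (R ⧸ Ideal.span {x}) (QuotSMulTop x N)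
  have := Module.finitePresentation_of_finite R N
  have h := Module.free_quotSMulTop_iff_free R N (x := x)
    (by rwa [IsLocalRing.jacobson_eq_maximalIdeal ⊥ bot_ne_top]) hN
  constructor
  · intro hp
    have := h.mpr Module.free_of_flat_of_isLocalRing
    infer_instance
  · intro hp
    have := h.mp Module.free_of_flat_of_isLocalRing
    infer_instance

lemma aux_pd_quot {R : Type u} [CommRing R] [IsLocalRing R] [IsNoetherianRing R]
    (x : R) (hx : x ∈ maximalIdeal R) (hR : IsSMulRegular R x) (n : ℕ)
    (N : Type u) [AddCommGroup N] [Module R N]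
    [Module.Finite R N] (hN : IsSMulRegular N x) :
    HasProjectiveDimensionLE (ModuleCat.of R N) n ↔
    HasProjectiveDimensionLE (ModuleCat.of (R ⧸ Ideal.span {x}) (QuotSMulTop x N)) n := by
  induction n generalizing N with
  | zero =>
    rw [← projective_iff_hasProjectiveDimensionLE_zero,
      ← projective_iff_hasProjectiveDimensionLE_zero, ← IsProjective.iff_projective,
      ← IsProjective.iff_projective]
    exact aux_projective_quot x hx N hN
  | succ n ih =>
    rcases Module.exists_finite_presentation R N with ⟨F, _, _, _, _, f, surjf⟩
    let S := f.shortComplexKer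
    have S_exact := LinearMap.shortExact_shortComplexKer surjf
    have proj := ModuleCat.projective_of_categoryTheory_projective S.X₂
    have hF : IsSMulRegular F x := Module.Flat.isSMulRegular_of_isRegular 
      ⟨fun _ _ h ↦ hR h, fun _ _ h ↦ hR (by simpa [mul_comm] using h)⟩
    let K := LinearMap.ker f
    have hK : IsSMulRegular K x := hF.submodule K x
    let a : QuotSMulTop x K →ₗ[R ⧸ Ideal.span {x}] QuotSMulTop x F :=
      (QuotSMulTop.map x K.subtype).extendScalarsOfSurjective Ideal.Quotient.mk_surjective
    let c : QuotSMulTop x F →ₗ[R ⧸ Ideal.span {x}] QuotSMulTop x N :=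
      (QuotSMulTop.map x f).extendScalarsOfSurjective Ideal.Quotient.mk_surjective
    have hac : Function.Exact a c := QuotSMulTop.map_exact x (LinearMap.exact_subtype_ker_map f) surjf
    have hc : Function.Surjective c := QuotSMulTop.map_surjective x surjf
    have ha : Function.Injective a := by
      have := QuotSMulTop.map_first_exact_on_four_term_exact_of_isSMulRegular_last
        (r := x) (f₁ := (0 : PUnit.{u+1} →ₗ[R] K)) (f₂ := K.subtype) (f₃ := f) (by
          rw [LinearMap.exact_zero_iff_injective]
          exact K.injective_subtype) (LinearMap.exact_subtype_ker_map f) hN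
      rw [map_zero, LinearMap.exact_zero_iff_injective] at this
      exact this
    let T : ShortComplex (ModuleCat.{u} (R ⧸ Ideal.span {x})) :=
      ModuleCat.shortComplexOfCompEqZero a c hac.linearMap_comp_eq_zero
    have T_exact : T.ShortExact := 
      { exact := (ShortComplex.ShortExact.moduleCat_exact_iff_function_exact _).mpr hac
        mono_f := (ModuleCat.mono_iff_injective _).mpr ha
        epi_g := (ModuleCat.epi_iff_surjective _).mpr hc }
    have projT : Projective T.X₂ := by
      rw [← IsProjective.iff_projective]
      change Module.Projective (R ⧸ Ideal.span {x}) (QuotSMulTop x F)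
      infer_instance
    have h1 := S_exact.hasProjectiveDimensionLT_X₃_iff n proj
    have h2 := T_exact.hasProjectiveDimensionLT_X₃_iff n projT
    exact h1.trans ((ih K hK).trans h2.symm)

lemma aux_local (d : ℕ) {R : Type u} [CommRing R] [IsLocalRing R] [IsNoetherianRing R]
    (hd : ringKrullDim R ≤ d) (M : Type u) [AddCommGroup M] [Module R M] [Module.Finite R M]
    (n : ℕ) (h : HasProjectiveDimensionLE (ModuleCat.of R M) n) :
    HasProjectiveDimensionLE (ModuleCat.of R M) d := by
  induction d generalizing R M n with
  | zero | succ d ih =>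
    by_cases hreg : ∃ x ∈ maximalIdeal R, IsSMulRegular R x
    · obtain ⟨x, hx, hR⟩ := hreg
      have hne : Ideal.span {x} ≠ ⊤ := fun h ↦ by
        have := (Ideal.span_singleton_le_iff_mem (maximalIdeal R)).mpr hx
        rw [h, top_le_iff] at this
        exact (maximalIdeal.isMaximal R).ne_top this
      have : Nontrivial (R ⧸ Ideal.span {x}) := Ideal.Quotient.nontrivial_iff.mpr hne
      have : IsLocalRing (R ⧸ Ideal.span {x}) :=
        IsLocalRing.of_surjective' _ Ideal.Quotient.mk_surjective
      have hdim := ringKrullDim_quotient_span_singleton_succ_eq_ringKrullDim hR hx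
      rw [← hdim] at hd
      have h0 := ringKrullDim_nonneg_of_nontrivial (R := R ⧸ Ideal.span {x})
      first
      | exfalso
        have : (1 : WithBot ℕ∞) ≤ 0 := by
          calc (1 : WithBot ℕ∞) = 0 + 1 := by simp
            _ ≤ _ := by gcongr
            _ ≤ _ := hd
        exact absurd this (by decide)
      | have hd' : ringKrullDim (R ⧸ Ideal.span {x}) ≤ d := by
          have h1 : (1 : WithBot ℕ∞) = ((1 : ℕ) : WithBot ℕ∞) := by simp
          rw [Nat.cast_add, h1] at hd
          exact (ENat.WithBot.add_le_add_natCast_right_iff).mp hd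
        rcases Module.exists_finite_presentation R M with ⟨F, _, _, _, _, f, surjf⟩
        let S := f.shortComplexKer
        have S_exact := LinearMap.shortExact_shortComplexKer surjf
        have proj := ModuleCat.projective_of_categoryTheory_projective S.X₂
        have hF : IsSMulRegular F x := Module.Flat.isSMulRegular_of_isRegular
          ⟨fun _ _ h ↦ hR h, fun _ _ h ↦ hR (by simpa [mul_comm] using h)⟩
        let K := LinearMap.ker f
        have hK : IsSMulRegular K x := hF.submodule K x
        have h1 := (S_exact.hasProjectiveDimensionLT_X₃_iff n proj).mp
          (hasProjectiveDimensionLT_of_ge _ (n + 1) (n + 2) (by omega))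
        have := Module.Finite.of_restrictScalars_finite R (R ⧸ Ideal.span {x}) (QuotSMulTop x K)
        have h2 := ih hd' (QuotSMulTop x K) n ((aux_pd_quot x hx hR n K hK).mp h1)
        have h3 := (aux_pd_quot x hx hR d K hK).mpr h2
        exact (S_exact.hasProjectiveDimensionLT_X₃_iff d proj).mpr h3
    · have hns : ¬ Subsingleton ((R ⧸ maximalIdeal R) →ₗ[R] R) := by
        intro hsub
        obtain ⟨r, hr, hreg'⟩ := IsSMulRegular.subsingleton_linearMap_iff.mp hsub
        exact hreg ⟨r, by simpa [Ideal.annihilator_quotient] using hr, hreg'⟩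
      rw [not_subsingleton_iff_nontrivial] at hns
      obtain ⟨φ, hφ⟩ := exists_ne (0 : (R ⧸ maximalIdeal R) →ₗ[R] R)
      have hproj := aux_projective_of_socle (φ 1) (fun h1 ↦ hφ (by
        ext
        simpa using h1)) (fun r hr ↦ by
          rw [← smul_eq_mul, ← map_smul, Algebra.smul_def, mul_one,
            Ideal.Quotient.algebraMap_eq, Ideal.Quotient.eq_zero_iff_mem.mpr hr, map_zero]) n
          (ModuleCat.of R M) h
      have := (projective_iff_hasProjectiveDimensionLE_zero (ModuleCat.of R M)).mp hproj
      exact hasProjectiveDimensionLT_of_ge _ (0 + 1) _ (by omega)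

lemma aux_global {R : Type u} [CommRing R] [IsNoetherianRing R] (d : ℕ)
    (hd : ringKrullDim R ≤ d) (M : ModuleCat.{u} R) [Module.Finite R M]
    (n : ℕ) (h : HasProjectiveDimensionLE M n) :
    HasProjectiveDimensionLE M d := by
  rw [ModuleCat.hasProjectiveDimensionLE_iff_forall_maximalSpectrum] at h ⊢
  intro m
  have := IsLocalization.isNoetherianRing m.1.primeCompl (Localization.AtPrime m.1) ‹_›
  have : Module.Finite (Localization m.1.primeCompl) (M.localizedModule m.1.primeCompl) :=
    Module.Finite.of_isLocalizedModule m.1.primeCompl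
      (M.localizedModuleMkLinearMap m.1.primeCompl)
  refine aux_local (R := Localization.AtPrime m.1) d ?_ (M.localizedModule m.1.primeCompl) n (h m)
  rw [IsLocalization.AtPrime.ringKrullDim_eq_height m.1]
  exact (Ideal.height_le_ringKrullDim_of_ne_top m.2.ne_top).trans hd

lemma aux_ext_iff {R : Type u} [CommRing R] {M : ModuleCat.{u} R} (P : ProjectiveResolution M)
    (Y : ModuleCat.{u} R) (p : ℕ) :
    Subsingleton (((Ext R (ModuleCat.{u} R) (p + 1)).obj (Opposite.op M)).obj Y) ↔
    ∀ f : P.complex.X (p + 1) ⟶ Y, P.complex.d (p + 2) (p + 1) ≫ f = 0 →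
      ∃ g : P.complex.X p ⟶ Y, P.complex.d (p + 1) p ≫ g = f := by
  rw [← ModuleCat.isZero_iff_subsingleton, (P.isoExt (R := R) (p + 1) Y).isZero_iff,
    ← HomologicalComplex.exactAt_iff_isZero_homology,
    HomologicalComplex.exactAt_iff' _ p (p + 1) (p + 2) (by simp) (by simp),
    ShortComplex.moduleCat_exact_iff]
  rfl

lemma aux_ext_iff' {R : Type u} [CommRing R] {M : ModuleCat.{u} R} (P : ProjectiveResolution M)
    (Y : ModuleCat.{u} R) (p : ℕ) :
    Subsingleton (Abelian.Ext.{u} M Y (p + 1)) ↔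
    ∀ f : P.complex.X (p + 1) ⟶ Y, P.complex.d (p + 2) (p + 1) ≫ f = 0 →
      ∃ g : P.complex.X p ⟶ Y, P.complex.d (p + 1) p ≫ g = f := by
  constructor
  · intro h f hf
    exact (P.extMk_eq_zero_iff f (p + 2) rfl hf p rfl).mp (Subsingleton.elim _ _)
  · intro h
    refine subsingleton_of_forall_eq 0 fun α ↦ ?_
    obtain ⟨f, hf, rfl⟩ := P.extMk_surjective α (p + 2) rfl
    exact (P.extMk_eq_zero_iff f (p + 2) rfl hf p rfl).mpr (h f hf)

/-- A projective resolution splits in degrees above the projective dimension. -/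
lemma aux_homotopy {R : Type u} [CommRing R] {M : ModuleCat.{u} R} (P : ProjectiveResolution M)
    (p : ℕ) (h : HasProjectiveDimensionLT M (p + 1)) :
    ∃ (a : P.complex.X p ⟶ P.complex.X (p + 1)) (b : P.complex.X (p + 1) ⟶ P.complex.X (p + 2)),
      P.complex.d (p + 1) p ≫ a + b ≫ P.complex.d (p + 2) (p + 1) = 𝟙 _ := by
  let d := P.complex.d (p + 1) p
  have hex1 : (ShortComplex.mk _ _ (P.complex.d_comp_d (p + 2) (p + 1) p)).Exact :=
    P.exact_succ p
  have h0 : P.complex.d (p + 2) (p + 1) ≫ Limits.factorThruImage d = 0 := by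
    rw [← cancel_mono (Limits.image.ι d)]
    simp [d]
  obtain ⟨ρ, hρ⟩ := (aux_ext_iff' P (Limits.image d) p).mp
    (HasProjectiveDimensionLT.subsingleton M (p + 1) (p + 1) le_rfl _) _ h0
  have hρ' : Limits.image.ι d ≫ ρ = 𝟙 _ := by
    rw [← cancel_epi (Limits.factorThruImage d), ← Category.assoc, Limits.image.fac]
    simpa [d] using hρ
  have hpr : Projective (Limits.image d) := (Retract.mk _ _ hρ').projective
  obtain ⟨σ, hσ⟩ := Projective.factors (𝟙 (Limits.image d)) (Limits.factorThruImage d)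
  have hz : (𝟙 _ - P.complex.d (p + 1) p ≫ ρ ≫ σ) ≫ P.complex.d (p + 1) p = 0 := by
    have e : P.complex.d (p + 1) p = Limits.factorThruImage d ≫ Limits.image.ι d := 
      (Limits.image.fac d).symm
    rw [Preadditive.sub_comp, Category.id_comp, Category.assoc, Category.assoc]
    nth_rw 3 [e]
    rw [reassoc_of% hσ, reassoc_of% hρ, ← e, sub_self]
  refine ⟨ρ ≫ σ, hex1.liftFromProjective _ hz, ?_⟩
  have hl : hex1.liftFromProjective _ hz ≫ P.complex.d (p + 2) (p + 1) =
    𝟙 _ - P.complex.d (p + 1) p ≫ ρ ≫ σ := hex1.liftFromProjective_comp _ hz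
  rw [hl]
  abel

lemma aux_tor {R : Type u} [CommRing R] {M : ModuleCat.{u} R} (X : ModuleCat.{u} R)
    (p : ℕ) (h : HasProjectiveDimensionLT M (p + 1)) :
    Subsingleton (((Tor (ModuleCat.{u} R) (p + 1)).obj X).obj M) := by
  let P := projectiveResolution M
  let F := (MonoidalCategory.tensoringLeft (ModuleCat.{u} R)).obj X
  obtain ⟨a, b, hab⟩ := aux_homotopy P p h
  rw [← ModuleCat.isZero_iff_subsingleton]
  change Limits.IsZero ((F.leftDerived (p + 1)).obj M)
  rw [(P.isoLeftDerivedObj F (p + 1)).isZero_iff]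
  change Limits.IsZero ((((F.mapHomologicalComplex _).obj P.complex)).homology (p + 1))
  rw [← HomologicalComplex.exactAt_iff_isZero_homology,
    HomologicalComplex.exactAt_iff' _ (p + 2) (p + 1) p (by simp) (by simp),
    ShortComplex.moduleCat_exact_iff]
  intro x hx
  have hx' : F.map (P.complex.d (p + 1) p) x = 0 := hx
  refine ⟨F.map b x, ?_⟩
  change F.map (P.complex.d (p + 2) (p + 1)) (F.map b x) = x
  have h1 : F.map (P.complex.d (p + 1) p ≫ a + b ≫ P.complex.d (p + 2) (p + 1)) x =
      F.map (𝟙 _) x := by rw [hab]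
  rw [F.map_add, F.map_comp, F.map_comp, F.map_id] at h1
  have h2 : F.map a (F.map (P.complex.d (p + 1) p) x) +
      F.map (P.complex.d (p + 2) (p + 1)) (F.map b x) = x := h1
  rw [hx', map_zero, zero_add] at h2
  exact h2

lemma aux_main {S : Type u} [CommRing S] [IsNoetherianRing S] (M : ModuleCat.{u} S)
    [Module.Finite S M] (h : projDim S M ≠ ⊤) (i : ℕ)
    (hi : ringKrullDim S < (i : WithBot ℕ∞)) :
    Subsingleton (torGroup S M M i) ∧ Subsingleton (extGroup S M M i) := by
  have h' : ∃ n : ℕ, ∀ (N : ModuleCat.{u} S) (i : ℕ), n < i → Subsingleton (extGroup S M N i) := by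
    by_contra! hc
    refine h ?_
    rw [projDim, sInf_eq_top]
    intro n hn
    by_contra hne
    lift n to ℕ using hne
    obtain ⟨N, j, hj, hns⟩ := hc n
    exact not_nontrivial_iff_subsingleton.mpr (hn N j (by exact_mod_cast hj)) hns
  obtain ⟨n, hn⟩ := h'
  let P := projectiveResolution M
  have hpd : HasProjectiveDimensionLE M n := by
    refine hasProjectiveDimensionLT_of_enoughInjectives M (n + 1) fun Y ↦ ?_
    exact (aux_ext_iff' P Y n).mpr ((aux_ext_iff P Y n).mp (hn Y (n + 1) (by omega)))
  cases i with
  | zero =>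
    have : Subsingleton S := by
      by_contra hs
      rw [not_subsingleton_iff_nontrivial] at hs
      exact absurd hi (not_lt.mpr (by simpa using ringKrullDim_nonneg_of_nontrivial (R := S)))
    exact ⟨Module.subsingleton S _, Module.subsingleton S _⟩
  | succ d =>
    have hd : ringKrullDim S ≤ d := by
      generalize ringKrullDim S = k at hi
      induction k using WithBot.recBotCoe with
      | bot => exact bot_le
      | coe k =>
        have h1 : k < ((d + 1 : ℕ) : ℕ∞) := by exact_mod_cast hi
        have h2 : k ≤ (d : ℕ∞) := Order.le_of_lt_add_one (by simpa using h1)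
        exact_mod_cast h2
    have hM : HasProjectiveDimensionLT M (d + 1) := aux_global d hd M n hpd
    exact ⟨aux_tor M d hM, (aux_ext_iff P _ d).mpr ((aux_ext_iff' P _ d).mp
      (HasProjectiveDimensionLT.subsingleton M (d + 1) (d + 1) le_rfl _))⟩

end HochschildAux

end HochschildAuxSection

theorem hochschild_homology_cohomology_vanishing
    (A : Type u) [CommRing A] (B : Type u) [CommRing B] [Algebra A B]
    [IsNoetherianRing A] [IsNoetherianRing B]
    [Module.Flat A B] [Algebra.EssFiniteType A B] :
    letI := mulModule A B
    projDim (B ⊗[A] B) (ModuleCat.of (B ⊗[A] B) B) ≠ ⊤ →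
      ∀ i : ℕ, ringKrullDim (B ⊗[A] B) < (i : WithBot ℕ∞) →
        Subsingleton (torGroup (B ⊗[A] B) (ModuleCat.of (B ⊗[A] B) B)
            (ModuleCat.of (B ⊗[A] B) B) i) ∧
        Subsingleton (extGroup (B ⊗[A] B) (ModuleCat.of (B ⊗[A] B) B)
            (ModuleCat.of (B ⊗[A] B) B) i) := by
  letI := mulModule A B
  intro hpd i hi
  have : IsNoetherianRing (B ⊗[A] B) := Algebra.EssFiniteType.isNoetherianRing B (B ⊗[A] B)
  have : Module.Finite (B ⊗[A] B) (ModuleCat.of (B ⊗[A] B) B) := by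
    refine ⟨⟨{(1 : B)}, ?_⟩⟩
    rw [eq_top_iff]
    intro b _
    rw [Finset.coe_singleton, Submodule.mem_span_singleton]
    refine ⟨b ⊗ₜ[A] 1, ?_⟩
    change Algebra.TensorProduct.lmul' A (S := B) (b ⊗ₜ[A] 1) * 1 = b
    simp
  exact HochschildAux.aux_main _ hpd i hi
end
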